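/- arXiv:0704.1607 — 2 statements merged into one kernel-verified Lean document; each statement's English description precedes it below -/
import Mathlib

section
/- Let ψ : ℝ → ℂ be 2π-periodic with ψ restricted to I = [0,2π) integrable (ψ|_I ∈ L¹(I)). Then ψ satisfies ψ(x) + ψ(h(x,z)) − ψ(z) − ψ(x − z + h(x,z)) = 0 for almost every (x,z) ∈ ℝ² if and only if there exist constants c₁, c₂ ∈ ℂ such that ψ(x) = c₁ + c₂ |sin(x/2)| for almost every x ∈ ℝ. (That is, the only locally integrable collisional invariants are the trivial ones.) -/
open MeasureTheory Real Set Filter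
open scoped Topology ENNReal ComplexConjugate

noncomputable section

/-- The fundamental periodic cell `I = [0, 2π)`. -/
def II : Set ℝ := Set.Ico 0 (2 * π)

/-- Lebesgue measure restricted to `I`. -/
def muI : Measure ℝ := volume.restrict II

/-- The dispersion relation `ω(x) = |sin(x/2)|`. -/
def omg (x : ℝ) : ℝ := |Real.sin (x / 2)|

/-- `Ω(x,y,z) = ω(x) + ω(y) − ω(z) − ω(x+y−z)`. -/
def Omg (x y z : ℝ) : ℝ := omg x + omg y - omg z - omg (x + y - z)

/-- The representative of `x` modulo `2π` lying in `[0, 2π)`. -/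
def mod2pi (x : ℝ) : ℝ := x - 2 * π * (⌊x / (2 * π)⌋ : ℝ)

/-- `h` on the fundamental cell: `h(x,z) = (z−x)/2 + 2 arcsin( tan(|z−x|/4) cos((x+z)/4) )`. -/
def h0 (x z : ℝ) : ℝ :=
  (z - x) / 2 + 2 * Real.arcsin (Real.tan (|z - x| / 4) * Real.cos ((x + z) / 4))

/-- The extension of `h` to all of `ℝ²`: `h(x,z) = h(x mod 2π, z mod 2π) − (x − (x mod 2π))`. -/
def hFPU (x z : ℝ) : ℝ := h0 (mod2pi x) (mod2pi z) - (x - mod2pi x)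

/-- `F₊(x,y) = (cos(x/2)+cos(y/2))² + 4 sin(x/2) sin(y/2)`. -/
def Fp (x y : ℝ) : ℝ :=
  (Real.cos (x / 2) + Real.cos (y / 2)) ^ 2 + 4 * Real.sin (x / 2) * Real.sin (y / 2)

/-- `F₋(x,y) = (cos(x/2)+cos(y/2))² − 4 sin(x/2) sin(y/2)`. -/
def Fm (x y : ℝ) : ℝ :=
  (Real.cos (x / 2) + Real.cos (y / 2)) ^ 2 - 4 * Real.sin (x / 2) * Real.sin (y / 2)

/-- The kernel `K₁(x,y) = 4·𝟙(F₋(x,y) > 0)/√(F₋(x,y))`. -/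
def K1 (x y : ℝ) : ℝ := if 0 < Fm x y then 4 / Real.sqrt (Fm x y) else 0

/-- The kernel `K₂(x,y) = 2/√(F₊(x,y))`. -/
def K2 (x y : ℝ) : ℝ := 2 / Real.sqrt (Fp x y)

/-- `V(x) = ∫_I K₂(x,y) dy`. -/
def VV (x : ℝ) : ℝ := ∫ y in II, K2 x y

/-- `W(x) = sin²(x/2)·V(x)`. -/
def WW (x : ℝ) : ℝ := Real.sin (x / 2) ^ 2 * VV x

/-!
In half-angles a collision takes `u < v` to two further angles, and the equation says that
`f t = ψ (2 t)` has zero defect on almost every such quadruple. For fixed `u` the other three angles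
are functions of `v`, with nonzero derivative for `v` slightly larger than `u`; averaging over `v`
there moves the dependence on `u` to smooth kernels, so `f` agrees almost everywhere with a `C¹`
function, for which the equation holds at every point. When the two further angles degenerate to
`0` and `π`, the limiting relation is homogeneous and separates the two rates of approach, hence is
linear in them. This forces `f' = a + b cos`, and a single collision excludes `a ≠ 0`.
-/

section FiberPreservingChart

variable {X Y : Type*} [TopologicalSpace X] [TopologicalSpace Y]
  {e : OpenPartialHomeomorph (X × Y) (X × Y)}

theorem prodMk_snd_symm (he : ∀ p, (e p).1 = p.1) {u : X} {y : Y} (hy : (u, y) ∈ e.target) :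
    (u, (e.symm (u, y)).2) = e.symm (u, y) :=
  Prod.ext (by rw [← he (e.symm (u, y)), e.right_inv hy]) rfl

theorem prodMk_snd_symm_mem_source (he : ∀ p, (e p).1 = p.1) {u : X} {y : Y}
    (hy : (u, y) ∈ e.target) : (u, (e.symm (u, y)).2) ∈ e.source :=
  prodMk_snd_symm he hy ▸ e.map_target hy

theorem image_snd_symm_fiber (he : ∀ p, (e p).1 = p.1) (u : X) :
    (fun y => (e.symm (u, y)).2) '' (Prod.mk u ⁻¹' e.target) = Prod.mk u ⁻¹' e.source := by
  refine Subset.antisymm (image_subset_iff.2 fun y hy => prodMk_snd_symm_mem_source he hy)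
    fun v hv => ?_
  have hev : (u, (e (u, v)).2) = e (u, v) := Prod.ext (he (u, v)).symm rfl
  exact ⟨(e (u, v)).2, by simpa only [mem_preimage, hev] using e.map_source hv,
    by simp only [hev, e.left_inv hv]⟩

theorem injOn_snd_symm_fiber (he : ∀ p, (e p).1 = p.1) (u : X) :
    InjOn (fun y => (e.symm (u, y)).2) (Prod.mk u ⁻¹' e.target) := by
  intro y hy z hz (hyz : (e.symm (u, y)).2 = (e.symm (u, z)).2)
  have hsymm : e.symm (u, y) = e.symm (u, z) := by
    rw [← prodMk_snd_symm he hy, ← prodMk_snd_symm he hz, hyz]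
  exact congrArg Prod.snd (e.symm.injOn hy hz hsymm)

end FiberPreservingChart

section FiberwiseSmoothing

variable {P G E : Type*} [NormedAddCommGroup P] [NormedSpace ℝ P]
  [NormedAddCommGroup G] [NormedSpace ℝ G] [NormedAddCommGroup E] [NormedSpace ℝ E]

theorem contDiffOn_integral_kernel_smul [MeasurableSpace G] [BorelSpace G] {μ : Measure G}
    {n : ℕ∞} {k : P × G → ℝ} {s : Set P} {K : Set G} (hs : IsOpen s) (hK : IsCompact K)
    (hkK : ∀ u y, u ∈ s → y ∉ K → k (u, y) = 0) (hk : ContDiffOn ℝ n k (s ×ˢ univ))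
    {f : G → E} (hf : LocallyIntegrable f μ) :
    ContDiffOn ℝ n (fun u => ∫ y, k (u, y) • f y ∂μ) s := by
  have hk_neg : ContDiffOn ℝ n (↿fun u y => k (u, -y)) (s ×ˢ univ) :=
    hk.comp (f := fun q : P × G => (q.1, -q.2)) (ContDiff.contDiffOn (by fun_prop))
      fun q hq => ⟨hq.1, mem_univ _⟩
  -- At the origin the convolution against `y ↦ k (u, -y)` is the integral against `k (u, ·)`.
  refine (contDiffOn_convolution_right_with_param_comp (v := fun _ => 0)
    (ContinuousLinearMap.lsmul ℝ ℝ : ℝ →L[ℝ] E →L[ℝ] E).flip contDiffOn_const hs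
    (k := -K) hK.neg (fun u y hu hy => hkK u (-y) hu hy) hf hk_neg).congr fun u _ => ?_
  simp [convolution]

theorem exists_openPartialHomeomorph_fst_prodMk [CompleteSpace P] [CompleteSpace G]
    {n : WithTop ℕ∞} (hn₀ : n ≠ 0) (hn : n ≠ (⊤ : ℕ∞)) {Φ : P × G → G} {p₀ : P × G}
    (hΦ : ContDiffAt ℝ n Φ p₀) {c : G ≃L[ℝ] G}
    (hc : HasFDerivAt (fun v => Φ (p₀.1, v)) (c : G →L[ℝ] G) p₀.2) :
    ∃ e : OpenPartialHomeomorph (P × G) (P × G), (∀ p, e p = (p.1, Φ p)) ∧ p₀ ∈ e.source ∧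
      ContDiffOn ℝ n e e.source ∧ ContDiffOn ℝ n e.symm e.target := by
  have hΦ' := (hΦ.differentiableAt hn₀).hasFDerivAt
  set L := fderiv ℝ Φ p₀
  have hL : L ∘L .inr ℝ P G = c :=
    (hΦ'.comp p₀.2 (hasFDerivAt_prodMk_right p₀.1 p₀.2)).unique hc
  replace hL (v : G) : L (0, v) = c v := DFunLike.congr_fun hL v
  let A := (ContinuousLinearEquiv.refl ℝ P).skewProd c (L ∘L .inl ℝ P G)
  have hA : (A : P × G →L[ℝ] P × G) = (ContinuousLinearMap.fst ℝ P G).prod L := by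
    ext p <;> simp [A, hL]
  have hE : ContDiffAt ℝ n (fun p => (p.1, Φ p)) p₀ := contDiffAt_fst.prodMk hΦ
  have hE' : HasFDerivAt (fun p => (p.1, Φ p)) (A : P × G →L[ℝ] P × G) p₀ :=
    hA ▸ hasFDerivAt_fst.prodMk hΦ'
  let e := hE.toOpenPartialHomeomorph _ hE' hn₀
  have hp₀ : p₀ ∈ e.source := hE.mem_toOpenPartialHomeomorph_source hE' hn₀
  have hsymm : ContDiffAt ℝ n e.symm (e p₀) := hE.to_localInverse hE' hn₀
  obtain ⟨S, hS, hSo, hpS⟩ := eventually_nhds_iff.1 ((hE.eventually hn).and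
    ((e.continuousAt hp₀).eventually (hsymm.eventually hn)))
  refine ⟨e.restrOpen S hSo, fun _ => rfl, ⟨hp₀, hpS⟩,
    fun p hp => (hS p hp.2).1.contDiffWithinAt, fun q hq => ?_⟩
  have hq' := (hS _ ((e.restrOpen S hSo).map_target hq).2).2
  change ContDiffAt ℝ n e.symm (e (e.symm q)) at hq'
  rw [e.right_inv hq.1] at hq'
  exact hq'.contDiffWithinAt

/-- For a chart `e` of `P × ℝ` preserving the first coordinate, the Jacobian of the substitution
`v = (e.symm (u, y)).2` that inverts `e` on the fibre over `u`. -/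
def fiberDeriv (e : OpenPartialHomeomorph (P × ℝ) (P × ℝ)) (q : P × ℝ) : ℝ :=
  (fderiv ℝ e.symm q (0, 1)).2

variable {e : OpenPartialHomeomorph (P × ℝ) (P × ℝ)} {n : ℕ}

theorem hasDerivAt_snd_symm (hsymm : DifferentiableOn ℝ e.symm e.target) {q : P × ℝ}
    (hq : q ∈ e.target) :
    HasDerivAt (fun y => (e.symm (q.1, y)).2) (fiberDeriv e q) q.2 :=
  (ContinuousLinearMap.snd ℝ P ℝ).hasFDerivAt.comp_hasDerivAt q.2
    ((hsymm.differentiableAt (e.open_target.mem_nhds hq)).hasFDerivAt.comp_hasDerivAt q.2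
      ((hasDerivAt_const q.2 q.1).prodMk (hasDerivAt_id q.2)))

theorem fiberDeriv_ne_zero (he : ∀ p, (e p).1 = p.1) (hd : DifferentiableOn ℝ e e.source)
    (hsymm : DifferentiableOn ℝ e.symm e.target) {q : P × ℝ} (hq : q ∈ e.target) :
    fiberDeriv e q ≠ 0 := by
  obtain ⟨u, y⟩ := q
  have hinv : (fun z => (e (u, (e.symm (u, z)).2)).2) =ᶠ[𝓝 y] id := by
    filter_upwards [(e.open_target.preimage (.prodMk_right u)).mem_nhds hq] with z hz
    rw [prodMk_snd_symm he hz, e.right_inv hz, id]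
  have hfiber : DifferentiableAt ℝ (fun v => (e (u, v)).2) (e.symm (u, y)).2 :=
    ((hd.differentiableAt (e.open_source.mem_nhds (prodMk_snd_symm_mem_source he hq))).comp
      (e.symm (u, y)).2 (by fun_prop)).snd
  have hchain := hfiber.hasDerivAt.comp y (hasDerivAt_snd_symm hsymm hq)
  exact right_ne_zero_of_mul
    ((hchain.unique ((hasDerivAt_id y).congr_of_eventuallyEq hinv)).trans_ne one_ne_zero)

theorem contDiffOn_fiberDeriv (hsymm : ContDiffOn ℝ (n + 1) e.symm e.target) :
    ContDiffOn ℝ n (fiberDeriv e) e.target :=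
  contDiff_snd.comp_contDiffOn
    ((hsymm.fderiv_of_isOpen e.open_target le_rfl).clm_apply contDiffOn_const)

theorem integrableOn_fiber_iff (he : ∀ p, (e p).1 = p.1)
    (hsymm : DifferentiableOn ℝ e.symm e.target) (u : P) (g : ℝ → E) :
    IntegrableOn g (Prod.mk u ⁻¹' e.source) ↔
      IntegrableOn (fun y => |fiberDeriv e (u, y)| • g (e.symm (u, y)).2)
        (Prod.mk u ⁻¹' e.target) := by
  rw [← image_snd_symm_fiber he u]
  exact integrableOn_image_iff_integrableOn_abs_deriv_smul
    (e.open_target.preimage (.prodMk_right u)).measurableSet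
    (fun y hy => (hasDerivAt_snd_symm hsymm hy).hasDerivWithinAt) (injOn_snd_symm_fiber he u) g

theorem setIntegral_fiber (he : ∀ p, (e p).1 = p.1)
    (hsymm : DifferentiableOn ℝ e.symm e.target) (u : P) (g : ℝ → E) :
    ∫ v in Prod.mk u ⁻¹' e.source, g v =
      ∫ y in Prod.mk u ⁻¹' e.target, |fiberDeriv e (u, y)| • g (e.symm (u, y)).2 := by
  rw [← image_snd_symm_fiber he u]
  exact integral_image_eq_integral_abs_deriv_smul
    (e.open_target.preimage (.prodMk_right u)).measurableSet
    (fun y hy => (hasDerivAt_snd_symm hsymm hy).hasDerivWithinAt) (injOn_snd_symm_fiber he u) g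

/-- The kernel `k` of the operator `f ↦ ∫ v, χ v • f (e (u, v)).2` in the fibre coordinate of a
chart `e` preserving the first coordinate: the substitution `y = (e (u, v)).2` turns this integral
into `∫ y, k (u, y) • f y`. -/
def fiberKernel (e : OpenPartialHomeomorph (P × ℝ) (P × ℝ)) (χ : ℝ → ℝ) : P × ℝ → ℝ :=
  e.target.indicator fun q => |fiberDeriv e q| * χ (e.symm q).2

theorem fiberKernel_eq_zero (he : ∀ p, (e p).1 = p.1) {χ : ℝ → ℝ} {N : Set P} {q : P × ℝ}
    (hqN : q.1 ∈ N) (hq : q ∉ e '' (N ×ˢ tsupport χ)) : fiberKernel e χ q = 0 := by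
  refine indicator_apply_eq_zero.2 fun hqt => mul_eq_zero_of_right _ ?_
  refine image_eq_zero_of_notMem_tsupport fun hχ => hq ⟨e.symm q, ⟨?_, hχ⟩, e.right_inv hqt⟩
  rwa [← prodMk_snd_symm he hqt]

theorem contDiffOn_fiberKernel (he : ∀ p, (e p).1 = p.1) (hd : DifferentiableOn ℝ e e.source)
    (hsymm : ContDiffOn ℝ (n + 1) e.symm e.target) {χ : ℝ → ℝ} (hχ : ContDiff ℝ n χ)
    {N : Set P} (hNχ : N ×ˢ tsupport χ ⊆ e.source) (hclosed : IsClosed (e '' (N ×ˢ tsupport χ))) :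
    ContDiffOn ℝ n (fiberKernel e χ) (interior N ×ˢ univ) := by
  have hsymm₁ : DifferentiableOn ℝ e.symm e.target := hsymm.differentiableOn (by simp)
  rintro q ⟨hqN, -⟩
  refine ContDiffAt.contDiffWithinAt ?_
  by_cases hq : q ∈ e.target
  · have hqt := e.open_target.mem_nhds hq
    have habs : ContDiffAt ℝ n (fun q => |fiberDeriv e q|) q :=
      (contDiffAt_abs (fiberDeriv_ne_zero he hd hsymm₁ hq)).comp q
        ((contDiffOn_fiberDeriv hsymm).contDiffAt hqt)
    have hcomp : ContDiffAt ℝ n (fun q => χ (e.symm q).2) q :=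
      hχ.contDiffAt.comp q ((hsymm.contDiffAt hqt).of_le (by norm_cast; omega)).snd
    exact (habs.mul hcomp).congr_of_eventuallyEq
      (eventuallyEq_of_mem hqt fun x hx => indicator_of_mem hx _)
  · have hqχ : q ∉ e '' (N ×ˢ tsupport χ) := fun ⟨p, hp, hpq⟩ => hq (hpq ▸ e.map_source (hNχ hp))
    refine (contDiffAt_const (c := (0 : ℝ))).congr_of_eventuallyEq ?_
    filter_upwards [hclosed.isOpen_compl.mem_nhds hqχ,
      (isOpen_interior.preimage continuous_fst).mem_nhds hqN] with x hx hxN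
    exact fiberKernel_eq_zero he (interior_subset hxN) hx

theorem integral_comp_chart (he : ∀ p, (e p).1 = p.1) (hsymm : DifferentiableOn ℝ e.symm e.target)
    {χ : ℝ → ℝ} {u : P} (hχ : tsupport χ ⊆ Prod.mk u ⁻¹' e.source) (f : ℝ → E) :
    ∫ v, χ v • f (e (u, v)).2 = ∫ y, fiberKernel e χ (u, y) • f y := by
  have htarget : MeasurableSet (Prod.mk u ⁻¹' e.target) :=
    (e.open_target.preimage (.prodMk_right u)).measurableSet
  calc ∫ v, χ v • f (e (u, v)).2
      = ∫ v in Prod.mk u ⁻¹' e.source, χ v • f (e (u, v)).2 := by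
        refine (setIntegral_eq_integral_of_forall_compl_eq_zero fun v hv => ?_).symm
        rw [image_eq_zero_of_notMem_tsupport fun h => hv (hχ h), zero_smul]
    _ = ∫ y in Prod.mk u ⁻¹' e.target,
          |fiberDeriv e (u, y)| • χ (e.symm (u, y)).2 • f (e (u, (e.symm (u, y)).2)).2 :=
        setIntegral_fiber he hsymm u _
    _ = ∫ y in Prod.mk u ⁻¹' e.target, fiberKernel e χ (u, y) • f y := by
        refine setIntegral_congr_fun htarget fun y hy => ?_
        simp only [prodMk_snd_symm he hy, e.right_inv hy, smul_smul, fiberKernel,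
          indicator_of_mem (show (u, y) ∈ e.target from hy)]
    _ = ∫ y, fiberKernel e χ (u, y) • f y := by
        refine setIntegral_eq_integral_of_forall_compl_eq_zero fun y hy => ?_
        rw [fiberKernel, indicator_of_notMem (by exact hy), zero_smul]

theorem integrable_comp_chart_iff (he : ∀ p, (e p).1 = p.1)
    (hsymm : DifferentiableOn ℝ e.symm e.target) {χ : ℝ → ℝ} {u : P}
    (hχ : tsupport χ ⊆ Prod.mk u ⁻¹' e.source) (f : ℝ → E) :
    Integrable (fun v => χ v • f (e (u, v)).2) ↔
      Integrable fun y => fiberKernel e χ (u, y) • f y := by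
  have htarget : MeasurableSet (Prod.mk u ⁻¹' e.target) :=
    (e.open_target.preimage (.prodMk_right u)).measurableSet
  calc Integrable (fun v => χ v • f (e (u, v)).2)
      ↔ IntegrableOn (fun v => χ v • f (e (u, v)).2) (Prod.mk u ⁻¹' e.source) := by
        refine (integrableOn_iff_integrable_of_support_subset fun v hv => hχ ?_).symm
        exact subset_tsupport χ (left_ne_zero_of_smul hv)
    _ ↔ IntegrableOn
          (fun y => |fiberDeriv e (u, y)| • χ (e.symm (u, y)).2 • f (e (u, (e.symm (u, y)).2)).2)
          (Prod.mk u ⁻¹' e.target) := integrableOn_fiber_iff he hsymm u _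
    _ ↔ IntegrableOn (fun y => fiberKernel e χ (u, y) • f y) (Prod.mk u ⁻¹' e.target) := by
        refine integrableOn_congr_fun (fun y hy => ?_) htarget
        simp only [prodMk_snd_symm he hy, e.right_inv hy, smul_smul, fiberKernel,
          indicator_of_mem (show (u, y) ∈ e.target from hy)]
    _ ↔ Integrable fun y => fiberKernel e χ (u, y) • f y := by
        refine integrableOn_iff_integrable_of_support_subset fun y hy => ?_
        exact mem_of_indicator_ne_zero (s := e.target) (left_ne_zero_of_smul hy)

theorem integrable_and_contDiffOn_integral_comp_chart (he : ∀ p, (e p).1 = p.1)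
    (hd : DifferentiableOn ℝ e e.source) (hsymm : ContDiffOn ℝ (n + 1) e.symm e.target)
    {χ : ℝ → ℝ} (hχ : ContDiff ℝ n χ) (hχc : HasCompactSupport χ) {N : Set P} (hN : IsCompact N)
    (hNχ : N ×ˢ tsupport χ ⊆ e.source) {f : ℝ → E} (hf : LocallyIntegrable f) :
    (∀ u ∈ interior N, Integrable fun v => χ v • f (e (u, v)).2) ∧
      ContDiffOn ℝ n (fun u => ∫ v, χ v • f (e (u, v)).2) (interior N) := by
  have hC : IsCompact (e '' (N ×ˢ tsupport χ)) :=
    (hN.prod hχc).image_of_continuousOn (e.continuousOn.mono hNχ)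
  have hk := contDiffOn_fiberKernel he hd hsymm hχ hNχ hC.isClosed
  have hk₀ : ∀ u y, u ∈ interior N → y ∉ Prod.snd '' (e '' (N ×ˢ tsupport χ)) →
      fiberKernel e χ (u, y) = 0 := fun u y hu hy =>
    fiberKernel_eq_zero he (interior_subset hu) fun hq => hy (mem_image_of_mem Prod.snd hq)
  have hfiber : ∀ u ∈ interior N, tsupport χ ⊆ Prod.mk u ⁻¹' e.source :=
    fun u hu v hv => hNχ ⟨interior_subset hu, hv⟩
  have hsymm₁ : DifferentiableOn ℝ e.symm e.target := hsymm.differentiableOn (by simp)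
  constructor
  · intro u hu
    have hcont : Continuous fun y => fiberKernel e χ (u, y) :=
      hk.continuousOn.comp_continuous (.prodMk_right u) fun y => ⟨hu, mem_univ y⟩
    exact (integrable_comp_chart_iff he hsymm₁ (hfiber u hu) f).2
      (hf.integrable_smul_left_of_hasCompactSupport hcont
        (.intro (hC.image continuous_snd) fun y hy => hk₀ u y hu hy))
  · exact (contDiffOn_integral_kernel_smul isOpen_interior (hC.image continuous_snd) hk₀ hk
      hf).congr fun u hu => integral_comp_chart he hsymm₁ (hfiber u hu) f

-- A point with `∂Φ/∂v ≠ 0` has a chart straightening the fibres of `Φ`; there the substitution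
-- `y = Φ (u, v)` moves the dependence on `u` from the rough function `f` to a smooth kernel.
theorem exists_contDiffAt_integral_comp [ProperSpace P] {Φ : P × ℝ → ℝ} {u₀ : P} {v₀ c : ℝ}
    (hΦ : ContDiffAt ℝ (n + 1) Φ (u₀, v₀)) (hc : HasDerivAt (fun v => Φ (u₀, v)) c v₀)
    (hc₀ : c ≠ 0) {f : ℝ → E} (hf : IntegrableAtFilter f (𝓝 (Φ (u₀, v₀)))) :
    ∃ V ∈ 𝓝 v₀, ∀ χ : ℝ → ℝ, ContDiff ℝ n χ → HasCompactSupport χ → tsupport χ ⊆ V →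
      (∀ᶠ u in 𝓝 u₀, Integrable fun v => χ v • f (Φ (u, v))) ∧
        ContDiffAt ℝ n (fun u => ∫ v, χ v • f (Φ (u, v))) u₀ := by
  obtain ⟨e, he, hmem, heC, hsymm⟩ := exists_openPartialHomeomorph_fst_prodMk (n := n + 1)
    (by simp) (by norm_cast; simp) hΦ (hc.hasFDerivAt_equiv hc₀)
  have he₁ (p) : (e p).1 = p.1 := by rw [he]
  obtain ⟨W, hW, hfW⟩ := hf
  have hopen : IsOpen (e.source ∩ e ⁻¹' (univ ×ˢ interior W)) :=
    e.isOpen_inter_preimage (isOpen_univ.prod isOpen_interior)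
  have hfi : Integrable ((interior W).indicator f) :=
    (hfW.mono_set interior_subset).integrable_indicator isOpen_interior.measurableSet
  refine ⟨Prod.mk u₀ ⁻¹' (e.source ∩ e ⁻¹' (univ ×ˢ interior W)),
    (hopen.preimage (.prodMk_right u₀)).mem_nhds
      ⟨hmem, by simpa [he] using mem_interior_iff_mem_nhds.2 hW⟩, fun χ hχ hχc hχV => ?_⟩
  obtain ⟨U, T, hU, -, hu₀, hT, hUT⟩ := generalized_tube_lemma isCompact_singleton hχc hopen
    (by rintro ⟨u, v⟩ ⟨rfl, hv⟩; exact hχV hv)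
  obtain ⟨r, hr, hrU⟩ := Metric.nhds_basis_closedBall.mem_iff.1
    (hU.mem_nhds (singleton_subset_iff.1 hu₀))
  have hsub : Metric.closedBall u₀ r ×ˢ tsupport χ ⊆ e.source ∩ e ⁻¹' (univ ×ˢ interior W) :=
    (prod_mono hrU hT).trans hUT
  have hN : interior (Metric.closedBall u₀ r) ∈ 𝓝 u₀ :=
    interior_mem_nhds.2 (Metric.closedBall_mem_nhds u₀ hr)
  have hcongr : ∀ᶠ u in 𝓝 u₀, (fun v => χ v • (interior W).indicator f (e (u, v)).2) =
      fun v => χ v • f (Φ (u, v)) := by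
    filter_upwards [hN] with u hu
    ext v
    by_cases hv : v ∈ tsupport χ
    · rw [indicator_of_mem (hsub ⟨interior_subset hu, hv⟩).2.2, he]
    · simp only [image_eq_zero_of_notMem_tsupport hv, zero_smul]
  obtain ⟨hint, hsmooth⟩ := integrable_and_contDiffOn_integral_comp_chart he₁
    (heC.differentiableOn (by simp)) hsymm hχ hχc (isCompact_closedBall u₀ r)
    (hsub.trans inter_subset_left) hfi.locallyIntegrable
  refine ⟨?_, (hsmooth.contDiffAt hN).congr_of_eventuallyEq ?_⟩
  · filter_upwards [hN, hcongr] with u hu hcu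
    exact hcu ▸ hint u hu
  · filter_upwards [hcongr] with u hcu
    rw [hcu]

end FiberwiseSmoothing

section Gluing

theorem exists_contDiffOn_ae_eq {D E : Type*} [NormedAddCommGroup D] [NormedSpace ℝ D]
    [SecondCountableTopology D] [MeasurableSpace D] [OpensMeasurableSpace D] {μ : Measure D}
    [μ.IsOpenPosMeasure] [NormedAddCommGroup E] [NormedSpace ℝ E] {n : WithTop ℕ∞} {s : Set D}
    (hs : IsOpen s) {f : D → E}
    (hf : ∀ x ∈ s, ∃ g : D → E, ∃ U : Set D, IsOpen U ∧ x ∈ U ∧ ContDiffOn ℝ n g U ∧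
      f =ᵐ[μ.restrict U] g) :
    ∃ F, ContDiffOn ℝ n F s ∧ f =ᵐ[μ.restrict s] F := by
  choose! g U hU hxU hg hfg using hf
  have hglue : ∀ x ∈ s, EqOn (fun y => g y y) (g x) (s ∩ U x) := by
    intro x hx y ⟨hy, hyx⟩
    have hae : g y =ᵐ[μ.restrict (U y ∩ U x)] g x :=
      EventuallyEq.trans
        (ae_restrict_of_ae_restrict_of_subset inter_subset_left (hfg y hy).symm)
        (ae_restrict_of_ae_restrict_of_subset inter_subset_right (hfg x hx))
    exact Measure.eqOn_open_of_ae_eq hae ((hU y hy).inter (hU x hx))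
      ((hg y hy).continuousOn.mono inter_subset_left)
      ((hg x hx).continuousOn.mono inter_subset_right) ⟨hxU y hy, hyx⟩
  have hnhds : ∀ x ∈ s, s ∩ U x ∈ 𝓝 x := fun x hx => (hs.inter (hU x hx)).mem_nhds ⟨hx, hxU x hx⟩
  refine ⟨fun y => g y y, fun x hx => ?_, ?_⟩
  · exact (((hg x hx).contDiffAt ((hU x hx).mem_nhds (hxU x hx))).congr_of_eventuallyEq
      ((hglue x hx).eventuallyEq_of_mem (hnhds x hx))).contDiffWithinAt
  · rw [EventuallyEq, ae_restrict_iff' hs.measurableSet]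
    refine measure_null_of_locally_null _ fun x hx => ?_
    have hxs : x ∈ s := (Classical.not_imp.1 hx).1
    refine ⟨_, inter_mem_nhdsWithin _ (hnhds x hxs), ?_⟩
    refine measure_mono_null ?_ (ae_iff.1 ((ae_restrict_iff' (hU x hxs).measurableSet).1
      (hfg x hxs)))
    exact fun y ⟨hy, hys⟩ hfy => hy fun _ => (hfy hys.2).trans (hglue x hxs hys).symm

end Gluing

section NullSets

theorem quasiMeasurePreserving_restrict_of_leftInvOn {D : Type*} [NormedAddCommGroup D]
    [NormedSpace ℝ D] [FiniteDimensional ℝ D] [MeasurableSpace D] [BorelSpace D] {μ : Measure D}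
    [μ.IsAddHaarMeasure] {g g' : D → D} {s t : Set D} (hg : Measurable g) (hgst : MapsTo g s t)
    (hg' : DifferentiableOn ℝ g' t) (hgg' : LeftInvOn g' g s) :
    Measure.QuasiMeasurePreserving g (μ.restrict s) (μ.restrict t) := by
  refine ⟨hg, Measure.AbsolutelyContinuous.mk fun N hN hN₀ => ?_⟩
  rw [Measure.restrict_apply hN] at hN₀
  rw [Measure.map_apply hg hN, Measure.restrict_apply (hg hN)]
  have himage : g ⁻¹' N ∩ s ⊆ g' '' (N ∩ t) :=
    fun x ⟨hxN, hxs⟩ => ⟨g x, ⟨hxN, hgst hxs⟩, hgg' hxs⟩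
  exact measure_mono_null himage (addHaar_image_eq_zero_of_differentiableOn_of_addHaar_eq_zero μ
    (hg'.mono inter_subset_right) hN₀)

end NullSets

section CollisionGeometry

/-- The ordered pairs `u < v` in `(0, π)`: up to sign, the nontrivial collisions between the wave
numbers `2 * u` and `2 * v`. -/
def collisionTriangle : Set (ℝ × ℝ) := {p | 0 < p.1 ∧ p.1 < p.2 ∧ p.2 < π}

/-- The common amount by which the two further angles of a collision exceed `(v - u) / 2` and
`π - (v - u) / 2`. -/
def shiftAngle (p : ℝ × ℝ) : ℝ := arcsin (tan ((p.2 - p.1) / 2) * cos ((p.1 + p.2) / 2))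

/-- Half of `h (2 * u, 2 * v)`: the incoming half angle colliding with `u`. -/
def inAngle (p : ℝ × ℝ) : ℝ := (p.2 - p.1) / 2 + shiftAngle p

/-- The outgoing half angle leaving together with `v`; it is `u + inAngle (u, v) - v`, reduced
modulo `π`. -/
def outAngle (p : ℝ × ℝ) : ℝ := π - (p.2 - p.1) / 2 + shiftAngle p

variable {p : ℝ × ℝ}

theorem isOpen_collisionTriangle : IsOpen collisionTriangle :=
  (isOpen_lt continuous_const continuous_fst).inter
    ((isOpen_lt continuous_fst continuous_snd).inter (isOpen_lt continuous_snd continuous_const))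

theorem fst_mem_of_mem_collisionTriangle (hp : p ∈ collisionTriangle) : p.1 ∈ Ioo 0 π :=
  ⟨hp.1, hp.2.1.trans hp.2.2⟩

theorem snd_mem_of_mem_collisionTriangle (hp : p ∈ collisionTriangle) : p.2 ∈ Ioo 0 π :=
  ⟨hp.1.trans hp.2.1, hp.2.2⟩

theorem collisionTriangle_subset : collisionTriangle ⊆ Ioo 0 π ×ˢ Ioo 0 π := fun _ hp =>
  ⟨fst_mem_of_mem_collisionTriangle hp, snd_mem_of_mem_collisionTriangle hp⟩

theorem abs_cos_half_add_lt_cos_half_sub (hp : p ∈ Ioo 0 π ×ˢ Ioo 0 π) :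
    |cos ((p.1 + p.2) / 2)| < cos ((p.2 - p.1) / 2) := by
  obtain ⟨⟨hu, hu'⟩, hv, hv'⟩ := hp
  have hsin : 0 < sin (p.1 / 2) * sin (p.2 / 2) :=
    mul_pos (sin_pos_of_pos_of_lt_pi (by linarith) (by linarith))
      (sin_pos_of_pos_of_lt_pi (by linarith) (by linarith))
  have hcos : 0 < cos (p.1 / 2) * cos (p.2 / 2) :=
    mul_pos (cos_pos_of_mem_Ioo ⟨by linarith, by linarith⟩)
      (cos_pos_of_mem_Ioo ⟨by linarith, by linarith⟩)
  rw [add_div, sub_div, cos_add, cos_sub, abs_lt]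
  constructor <;> linarith

theorem cos_half_sub_pos (hp : p ∈ Ioo 0 π ×ˢ Ioo 0 π) : 0 < cos ((p.2 - p.1) / 2) :=
  (abs_nonneg _).trans_lt (abs_cos_half_add_lt_cos_half_sub hp)

theorem abs_tan_mul_cos_lt_one (hp : p ∈ Ioo 0 π ×ˢ Ioo 0 π) :
    |tan ((p.2 - p.1) / 2) * cos ((p.1 + p.2) / 2)| < 1 := by
  have hcos := cos_half_sub_pos hp
  calc |tan ((p.2 - p.1) / 2) * cos ((p.1 + p.2) / 2)|
      ≤ |tan ((p.2 - p.1) / 2)| * cos ((p.2 - p.1) / 2) := by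
        rw [abs_mul]
        gcongr
        exact (abs_cos_half_add_lt_cos_half_sub hp).le
    _ = |sin ((p.2 - p.1) / 2)| := by
        rw [← tan_mul_cos hcos.ne', abs_mul, abs_of_pos hcos]
    _ < 1 := by
        rw [← sq_lt_one_iff_abs_lt_one]
        nlinarith [sin_sq_add_cos_sq ((p.2 - p.1) / 2)]

theorem sin_shiftAngle_mul_cos (hp : p ∈ Ioo 0 π ×ˢ Ioo 0 π) :
    sin (shiftAngle p) * cos ((p.2 - p.1) / 2) =
      sin ((p.2 - p.1) / 2) * cos ((p.1 + p.2) / 2) := by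
  have h := abs_lt.1 (abs_tan_mul_cos_lt_one hp)
  rw [shiftAngle, sin_arcsin h.1.le h.2.le, mul_right_comm, tan_mul_cos (cos_half_sub_pos hp).ne']

theorem shiftAngle_eq_of_sin_mul_cos (hp : cos ((p.2 - p.1) / 2) ≠ 0) {θ : ℝ}
    (hθ : θ ∈ Icc (-(π / 2)) (π / 2))
    (h : sin θ * cos ((p.2 - p.1) / 2) = sin ((p.2 - p.1) / 2) * cos ((p.1 + p.2) / 2)) :
    shiftAngle p = θ := by
  rw [shiftAngle, tan_eq_sin_div_cos, div_mul_eq_mul_div, ← h, mul_div_cancel_right₀ _ hp,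
    arcsin_sin hθ.1 hθ.2]

theorem abs_shiftAngle_lt (hp : p ∈ collisionTriangle) : |shiftAngle p| < (p.2 - p.1) / 2 := by
  have hsq := collisionTriangle_subset hp
  obtain ⟨hu, huv, hv⟩ := hp
  have hcos := cos_half_sub_pos hsq
  have htan : 0 < tan ((p.2 - p.1) / 2) :=
    tan_pos_of_pos_of_lt_pi_div_two (by linarith) (by linarith)
  have hlt : |tan ((p.2 - p.1) / 2) * cos ((p.1 + p.2) / 2)| < sin ((p.2 - p.1) / 2) := by
    rw [← tan_mul_cos hcos.ne', abs_mul, abs_of_pos htan]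
    exact mul_lt_mul_of_pos_left (abs_cos_half_add_lt_cos_half_sub hsq) htan
  rw [abs_lt] at hlt ⊢
  refine ⟨(lt_arcsin_iff_sin_lt' ⟨by linarith, by linarith⟩).2 ?_,
    (arcsin_lt_iff_lt_sin' ⟨by linarith, by linarith⟩).2 hlt.2⟩
  rw [sin_neg]
  exact hlt.1

theorem inAngle_mem (hp : p ∈ collisionTriangle) : inAngle p ∈ Ioo 0 π := by
  have h := abs_lt.1 (abs_shiftAngle_lt hp)
  obtain ⟨hu, -, hv⟩ := hp
  constructor <;> rw [inAngle] <;> linarith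

theorem outAngle_mem (hp : p ∈ collisionTriangle) : outAngle p ∈ Ioo 0 π := by
  have h := abs_lt.1 (abs_shiftAngle_lt hp)
  obtain ⟨hu, -, hv⟩ := hp
  constructor <;> rw [outAngle] <;> linarith

theorem fst_add_inAngle_add_pi (p : ℝ × ℝ) : p.1 + inAngle p + π = p.2 + outAngle p := by
  rw [inAngle, outAngle]
  ring

theorem sin_add_sin_eq_sin_add_sin_iff (u v θ : ℝ) :
    sin u + sin ((v - u) / 2 + θ) = sin v + sin (π - (v - u) / 2 + θ) ↔
      sin θ * cos ((v - u) / 2) = sin ((v - u) / 2) * cos ((u + v) / 2) := by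
  have hu : sin u = sin ((u + v) / 2 - (v - u) / 2) := by ring_nf
  have hv : sin v = sin ((u + v) / 2 + (v - u) / 2) := by ring_nf
  have hπ : sin (π - (v - u) / 2 + θ) = sin ((v - u) / 2 - θ) := by
    rw [← sin_pi_sub]
    ring_nf
  rw [hu, hv, hπ, sin_sub, sin_add, sin_add, sin_sub]
  constructor <;> intro h <;> linarith

theorem sin_fst_add_sin_inAngle (hp : p ∈ Ioo 0 π ×ˢ Ioo 0 π) :
    sin p.1 + sin (inAngle p) = sin p.2 + sin (outAngle p) :=
  (sin_add_sin_eq_sin_add_sin_iff _ _ _).2 (sin_shiftAngle_mul_cos hp)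

theorem shiftAngle_eq_of_sum_eq (hp : p ∈ collisionTriangle) {y w : ℝ} (hy : y ∈ Ioo 0 π)
    (hw : w ∈ Ioo 0 π) (hsum : p.1 + y + π = p.2 + w)
    (hsin : sin p.1 + sin y = sin p.2 + sin w) : shiftAngle p = y - (p.2 - p.1) / 2 := by
  have hcos := cos_half_sub_pos (collisionTriangle_subset hp)
  obtain ⟨hu, -, hv⟩ := hp
  refine shiftAngle_eq_of_sin_mul_cos hcos.ne' ⟨by linarith [hy.1], by linarith [hw.2]⟩ ?_
  rw [← sin_add_sin_eq_sin_add_sin_iff]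
  convert hsin using 3 <;> linarith

theorem prodMk_outAngle_mem (hp : p ∈ collisionTriangle) :
    (p.1, outAngle p) ∈ collisionTriangle := by
  have hy := inAngle_mem hp
  exact ⟨hp.1, by linarith [hp.2.2, hy.1, fst_add_inAngle_add_pi p], (outAngle_mem hp).2⟩

theorem inAngle_prodMk_mem (hp : p ∈ collisionTriangle) :
    (inAngle p, p.2) ∈ collisionTriangle := by
  have hw := outAngle_mem hp
  exact ⟨(inAngle_mem hp).1, by linarith [hp.1, hw.2, fst_add_inAngle_add_pi p], hp.2.2⟩

theorem outAngle_prodMk_outAngle (hp : p ∈ collisionTriangle) :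
    outAngle (p.1, outAngle p) = p.2 := by
  have hsum := fst_add_inAngle_add_pi p
  have hshift := shiftAngle_eq_of_sum_eq (prodMk_outAngle_mem hp) (inAngle_mem hp)
    (snd_mem_of_mem_collisionTriangle hp) (by linarith)
    ((sin_fst_add_sin_inAngle (collisionTriangle_subset hp)).trans (add_comm _ _))
  rw [outAngle, hshift]
  linarith

theorem inAngle_inAngle_prodMk (hp : p ∈ collisionTriangle) :
    inAngle (inAngle p, p.2) = p.1 := by
  have hshift := shiftAngle_eq_of_sum_eq (inAngle_prodMk_mem hp)
    (fst_mem_of_mem_collisionTriangle hp) (outAngle_mem hp)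
    (by linarith [fst_add_inAngle_add_pi p])
    ((add_comm _ _).trans (sin_fst_add_sin_inAngle (collisionTriangle_subset hp)))
  rw [inAngle, hshift]
  ring

variable {n : WithTop ℕ∞}

theorem contDiffOn_shiftAngle : ContDiffOn ℝ n shiftAngle (Ioo 0 π ×ˢ Ioo 0 π) := by
  intro p hp
  have h := abs_lt.1 (abs_tan_mul_cos_lt_one hp)
  have htan : ContDiffAt ℝ n (fun p : ℝ × ℝ => tan ((p.2 - p.1) / 2)) p :=
    ContDiffAt.comp (g := tan) p (contDiffAt_tan.2 (cos_half_sub_pos hp).ne') (by fun_prop)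
  exact ((contDiffAt_arcsin h.1.ne' h.2.ne).comp p
    (htan.mul (by fun_prop))).contDiffWithinAt

theorem contDiffOn_inAngle : ContDiffOn ℝ n inAngle (Ioo 0 π ×ˢ Ioo 0 π) :=
  ContDiffOn.add (by fun_prop) contDiffOn_shiftAngle

theorem contDiffOn_outAngle : ContDiffOn ℝ n outAngle (Ioo 0 π ×ˢ Ioo 0 π) :=
  ContDiffOn.add (by fun_prop) contDiffOn_shiftAngle

theorem measurable_shiftAngle : Measurable shiftAngle := by
  unfold shiftAngle
  simp only [tan_eq_sin_div_cos]
  exact measurable_arcsin.comp (by fun_prop)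

theorem measurable_inAngle : Measurable inAngle := by
  unfold inAngle
  exact Measurable.add (by fun_prop) measurable_shiftAngle

theorem measurable_outAngle : Measurable outAngle := by
  unfold outAngle
  exact Measurable.add (by fun_prop) measurable_shiftAngle

end CollisionGeometry

section AngleDefect

variable {E : Type*}

/-- The defect of `f` in the collision of `u` and `inAngle (u, v)` into `v` and
`outAngle (u, v)`. -/
def angleDefect [AddCommGroup E] (f : ℝ → E) (p : ℝ × ℝ) : E :=
  f p.1 + f (inAngle p) - f p.2 - f (outAngle p)

theorem quasiMeasurePreserving_fst_collisionTriangle :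
    Measure.QuasiMeasurePreserving Prod.fst (volume.restrict collisionTriangle)
      (volume.restrict (Ioo (0 : ℝ) π)) :=
  Measure.quasiMeasurePreserving_fst.restrict fun _ => fst_mem_of_mem_collisionTriangle

theorem quasiMeasurePreserving_snd_collisionTriangle :
    Measure.QuasiMeasurePreserving Prod.snd (volume.restrict collisionTriangle)
      (volume.restrict (Ioo (0 : ℝ) π)) :=
  Measure.quasiMeasurePreserving_snd.restrict fun _ => snd_mem_of_mem_collisionTriangle

theorem quasiMeasurePreserving_inAngle :
    Measure.QuasiMeasurePreserving inAngle (volume.restrict collisionTriangle)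
      (volume.restrict (Ioo 0 π)) :=
  quasiMeasurePreserving_fst_collisionTriangle.comp
    (quasiMeasurePreserving_restrict_of_leftInvOn (g := fun p => (inAngle p, p.2))
      (measurable_inAngle.prodMk measurable_snd) (fun _ => inAngle_prodMk_mem)
      (((contDiffOn_inAngle.mono collisionTriangle_subset).differentiableOn one_ne_zero).prodMk
        differentiableOn_snd)
      fun _ hp => Prod.ext (inAngle_inAngle_prodMk hp) rfl)

theorem quasiMeasurePreserving_outAngle :
    Measure.QuasiMeasurePreserving outAngle (volume.restrict collisionTriangle)
      (volume.restrict (Ioo 0 π)) :=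
  quasiMeasurePreserving_snd_collisionTriangle.comp
    (quasiMeasurePreserving_restrict_of_leftInvOn (g := fun p => (p.1, outAngle p))
      (measurable_fst.prodMk measurable_outAngle) (fun _ => prodMk_outAngle_mem)
      (differentiableOn_fst.prodMk
        ((contDiffOn_outAngle.mono collisionTriangle_subset).differentiableOn one_ne_zero))
      fun _ hp => Prod.ext rfl (outAngle_prodMk_outAngle hp))

theorem angleDefect_congr_ae [AddCommGroup E] {f g : ℝ → E}
    (h : f =ᵐ[volume.restrict (Ioo 0 π)] g) :
    angleDefect f =ᵐ[volume.restrict collisionTriangle] angleDefect g :=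
  (((quasiMeasurePreserving_fst_collisionTriangle.ae_eq h).add
    (quasiMeasurePreserving_inAngle.ae_eq h)).sub
    (quasiMeasurePreserving_snd_collisionTriangle.ae_eq h)).sub
    (quasiMeasurePreserving_outAngle.ae_eq h)

theorem continuousOn_angleDefect [AddCommGroup E] [TopologicalSpace E] [IsTopologicalAddGroup E]
    {f : ℝ → E} (hf : ContinuousOn f (Ioo 0 π)) :
    ContinuousOn (angleDefect f) collisionTriangle := by
  have hin : ContinuousOn inAngle collisionTriangle :=
    (contDiffOn_inAngle (n := 0)).continuousOn.mono collisionTriangle_subset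
  have hout : ContinuousOn outAngle collisionTriangle :=
    (contDiffOn_outAngle (n := 0)).continuousOn.mono collisionTriangle_subset
  exact (((hf.comp continuousOn_fst fun _ => fst_mem_of_mem_collisionTriangle).add
    (hf.comp hin fun _ => inAngle_mem)).sub
    (hf.comp continuousOn_snd fun _ => snd_mem_of_mem_collisionTriangle)).sub
    (hf.comp hout fun _ => outAngle_mem)

theorem eqOn_angleDefect [AddCommGroup E] {f g : ℝ → E} (h : EqOn f g (Ioo 0 π)) :
    EqOn (angleDefect f) (angleDefect g) collisionTriangle := fun p hp => by
  rw [angleDefect, angleDefect, h (fst_mem_of_mem_collisionTriangle hp), h (inAngle_mem hp),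
    h (snd_mem_of_mem_collisionTriangle hp), h (outAngle_mem hp)]

theorem angleDefect_add_smul_add_sin_smul [AddCommGroup E] [Module ℝ E] (c a b : E) {p : ℝ × ℝ}
    (hp : p ∈ collisionTriangle) : angleDefect (fun x => c + x • a + sin x • b) p = -(π • a) := by
  have hsum := fst_add_inAngle_add_pi p
  have hsin := sin_fst_add_sin_inAngle (collisionTriangle_subset hp)
  rw [angleDefect, ← sub_eq_zero]
  calc _ = (p.1 + inAngle p + π - (p.2 + outAngle p)) • a
        + (sin p.1 + sin (inAngle p) - (sin p.2 + sin (outAngle p))) • b := by module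
    _ = 0 := by rw [hsum, hsin, sub_self, sub_self, zero_smul, zero_smul, add_zero]

end AngleDefect

section Regularity

theorem hasDerivAt_shiftAngle_diag (u : ℝ) :
    HasDerivAt (fun v => shiftAngle (u, v)) (cos u / 2) u := by
  have hsub : HasDerivAt (fun v : ℝ => (v - u) / 2) (1 / 2) u :=
    ((hasDerivAt_id u).sub_const u).div_const 2
  have htan : HasDerivAt (fun v : ℝ => tan ((v - u) / 2))
      (1 / cos ((u - u) / 2) ^ 2 * (1 / 2)) u :=
    HasDerivAt.comp (h₂ := tan) u (hasDerivAt_tan (by simp)) hsub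
  have hcos : DifferentiableAt ℝ (fun v : ℝ => cos ((u + v) / 2)) u := by fun_prop
  have h := HasDerivAt.comp (h₂ := arcsin) u
    (hasDerivAt_arcsin (x := tan ((u - u) / 2) * cos ((u + u) / 2)) (by simp) (by simp))
    (htan.mul hcos.hasDerivAt)
  refine h.congr_deriv ?_
  rw [sub_self, zero_div, add_self_div_two, tan_zero, cos_zero]
  ring_nf
  simp

theorem exists_hasDerivAt_inAngle {u : ℝ} (hu : u ∈ Ioo 0 π) :
    ∃ v c, (u, v) ∈ collisionTriangle ∧ HasDerivAt (fun v => inAngle (u, v)) c v ∧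
      c ≠ 0 ∧ c ≠ 1 := by
  have hslice : ContDiffOn ℝ 1 (fun v => inAngle (u, v)) (Ioo 0 π) :=
    contDiffOn_inAngle.comp (contDiffOn_const.prodMk contDiffOn_id) fun v hv => ⟨hu, hv⟩
  have hderiv : ∀ v ∈ Ioo 0 π, HasDerivAt (fun v => inAngle (u, v))
      (deriv (fun v => inAngle (u, v)) v) v := fun v hv =>
    ((hslice.differentiableOn one_ne_zero).differentiableAt (isOpen_Ioo.mem_nhds hv)).hasDerivAt
  have hdiag : deriv (fun v => inAngle (u, v)) u = (1 + cos u) / 2 := by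
    have h := (((hasDerivAt_id u).sub_const u).div_const 2).add (hasDerivAt_shiftAngle_diag u)
    rw [add_div]
    exact h.deriv
  have hcont : ContinuousAt (deriv fun v => inAngle (u, v)) u :=
    (hslice.continuousOn_deriv_of_isOpen isOpen_Ioo le_rfl).continuousAt (isOpen_Ioo.mem_nhds hu)
  obtain ⟨hlt_cos, hcos_lt⟩ := mapsTo_cos_Ioo hu
  have hev : ∀ᶠ v in 𝓝[>] u, deriv (fun v => inAngle (u, v)) v ≠ 0 ∧
      deriv (fun v => inAngle (u, v)) v ≠ 1 :=
    ((hcont.eventually_ne (by rw [hdiag]; linarith)).and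
      (hcont.eventually_ne (by rw [hdiag]; linarith))).filter_mono nhdsWithin_le_nhds
  obtain ⟨v, ⟨hv₀, hv₁⟩, huv, hv⟩ := (hev.and (Ioo_mem_nhdsGT hu.2)).exists
  exact ⟨v, _, ⟨hu.1, huv, hv⟩, hderiv v ⟨hu.1.trans huv, hv⟩, hv₀, hv₁⟩

theorem hasDerivAt_outAngle {u v c : ℝ} (h : HasDerivAt (fun v => inAngle (u, v)) c v) :
    HasDerivAt (fun v => outAngle (u, v)) (c - 1) v := by
  have hsum : (fun v => outAngle (u, v)) = fun v => u + π + inAngle (u, v) - v := by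
    ext v
    linarith [fst_add_inAngle_add_pi (u, v)]
  rw [hsum]
  exact (h.const_add _).sub (hasDerivAt_id v)

theorem exists_contDiff_tsupport_subset_integral_eq_one {D : Type*} [NormedAddCommGroup D]
    [NormedSpace ℝ D] [FiniteDimensional ℝ D] [MeasurableSpace D] [BorelSpace D] (μ : Measure D)
    [IsLocallyFiniteMeasure μ] [μ.IsOpenPosMeasure] {n : ℕ∞} {s : Set D} {x : D} (hs : s ∈ 𝓝 x) :
    ∃ χ : D → ℝ, ContDiff ℝ n χ ∧ HasCompactSupport χ ∧ tsupport χ ⊆ s ∧ ∫ y, χ y ∂μ = 1 := by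
  obtain ⟨r, hr, hrs⟩ := Metric.nhds_basis_closedBall.mem_iff.1 hs
  let φ : ContDiffBump x := ⟨r / 2, r, half_pos hr, half_lt_self hr⟩
  exact ⟨φ.normed μ, φ.contDiff_normed, φ.hasCompactSupport_normed,
    φ.tsupport_normed_eq.trans_subset hrs, φ.integral_normed⟩

variable {E : Type*} [NormedAddCommGroup E] [NormedSpace ℝ E] {f : ℝ → E}

theorem eq_integral_of_angleDefect_eq_zero [CompleteSpace E] {χ : ℝ → ℝ} {u : ℝ}
    (hχ : ∫ v, χ v = 1) (hsupp : ∀ v ∈ tsupport χ, (u, v) ∈ collisionTriangle)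
    (hf : ∀ᵐ v, (u, v) ∈ collisionTriangle → angleDefect f (u, v) = 0)
    (hsnd : Integrable fun v => χ v • f v)
    (hout : Integrable fun v => χ v • f (outAngle (u, v)))
    (hin : Integrable fun v => χ v • f (inAngle (u, v))) :
    f u = (∫ v, χ v • f v) + (∫ v, χ v • f (outAngle (u, v))) -
      ∫ v, χ v • f (inAngle (u, v)) := by
  have hae : ∀ᵐ v, χ v • f u =
      χ v • f v + χ v • f (outAngle (u, v)) - χ v • f (inAngle (u, v)) := by
    filter_upwards [hf] with v hv
    by_cases hvs : v ∈ tsupport χ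
    · have h := hv (hsupp v hvs)
      rw [angleDefect, sub_sub, sub_eq_zero] at h
      rw [← smul_add, ← smul_sub, ← h, add_sub_cancel_right]
    · simp only [image_eq_zero_of_notMem_tsupport hvs, zero_smul, add_zero, sub_zero]
  calc f u = ∫ v, χ v • f u := by rw [integral_smul_const, hχ, one_smul]
    _ = ∫ v, (χ v • f v + χ v • f (outAngle (u, v)) - χ v • f (inAngle (u, v))) :=
        integral_congr_ae hae
    _ = _ := by rw [integral_sub (by exact hsnd.add hout) hin, integral_add hsnd hout]

theorem exists_local_contDiffOn_of_angleDefect_ae_eq_zero [CompleteSpace E]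
    (hf : LocallyIntegrableOn f (Ioo 0 π))
    (hdef : angleDefect f =ᵐ[volume.restrict collisionTriangle] 0) {u₀ : ℝ}
    (hu₀ : u₀ ∈ Ioo 0 π) :
    ∃ g : ℝ → E, ∃ U : Set ℝ, IsOpen U ∧ u₀ ∈ U ∧ ContDiffOn ℝ 1 g U ∧
      f =ᵐ[volume.restrict U] g := by
  obtain ⟨v₀, c, hmem, hc, hc₀, hc₁⟩ := exists_hasDerivAt_inAngle hu₀
  have hsq : Ioo 0 π ×ˢ Ioo 0 π ∈ 𝓝 (u₀, v₀) :=
    (isOpen_Ioo.prod isOpen_Ioo).mem_nhds (collisionTriangle_subset hmem)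
  have hfi : ∀ x ∈ Ioo 0 π, IntegrableAtFilter f (𝓝 x) := fun x hx =>
    (isOpen_Ioo.nhdsWithin_eq hx) ▸ hf x hx
  obtain ⟨V₁, hV₁, H₁⟩ := exists_contDiffAt_integral_comp (n := 1)
    (contDiffOn_inAngle.contDiffAt hsq) hc hc₀ (hfi _ (inAngle_mem hmem))
  obtain ⟨V₂, hV₂, H₂⟩ := exists_contDiffAt_integral_comp (n := 1)
    (contDiffOn_outAngle.contDiffAt hsq) (hasDerivAt_outAngle hc)
    (sub_ne_zero.2 hc₁) (hfi _ (outAngle_mem hmem))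
  obtain ⟨V₃, hV₃, H₃⟩ := exists_contDiffAt_integral_comp (n := 1) (Φ := Prod.snd) (u₀ := u₀)
    contDiffAt_snd (hasDerivAt_id v₀) one_ne_zero (hfi _ (snd_mem_of_mem_collisionTriangle hmem))
  obtain ⟨W, hW, V₄, hV₄, hWV⟩ := mem_nhds_prod_iff.1 (isOpen_collisionTriangle.mem_nhds hmem)
  obtain ⟨χ, hχ, hχc, hχV, hχ₁⟩ := exists_contDiff_tsupport_subset_integral_eq_one volume (n := 1)
    (inter_mem (inter_mem hV₁ hV₂) (inter_mem hV₃ hV₄))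
  obtain ⟨hint₁, hsmooth₁⟩ := H₁ χ hχ hχc fun v hv => (hχV hv).1.1
  obtain ⟨hint₂, hsmooth₂⟩ := H₂ χ hχ hχc fun v hv => (hχV hv).1.2
  obtain ⟨hint₃, hsmooth₃⟩ := H₃ χ hχ hχc fun v hv => (hχV hv).2.1
  obtain ⟨U, hU, hgU⟩ := ((hsmooth₃.add hsmooth₂).sub hsmooth₁).contDiffOn le_rfl (by simp)
  obtain ⟨U', hU'sub, hU', hu₀'⟩ := mem_nhds_iff.1
    (inter_mem (inter_mem hU hW) (inter_mem hint₁ (inter_mem hint₂ hint₃)))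
  refine ⟨_, U', hU', hu₀', hgU.mono fun u hu => (hU'sub hu).1.1, ?_⟩
  have hfib := Measure.ae_ae_of_ae_prod
    ((ae_restrict_iff' isOpen_collisionTriangle.measurableSet).1 hdef)
  filter_upwards [ae_restrict_of_ae hfib, ae_restrict_mem hU'.measurableSet] with u hu huU
  obtain ⟨⟨-, huW⟩, hin, hout, hsnd⟩ := hU'sub huU
  exact eq_integral_of_angleDefect_eq_zero hχ₁
    (fun v hv => hWV ⟨huW, (hχV hv).2.2⟩) hu hsnd hout hin

theorem exists_contDiffOn_of_angleDefect_ae_eq_zero [CompleteSpace E]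
    (hf : LocallyIntegrableOn f (Ioo 0 π))
    (hdef : angleDefect f =ᵐ[volume.restrict collisionTriangle] 0) :
    ∃ F, ContDiffOn ℝ 1 F (Ioo 0 π) ∧ f =ᵐ[volume.restrict (Ioo 0 π)] F ∧
      ∀ p ∈ collisionTriangle, angleDefect F p = 0 := by
  obtain ⟨F, hF, hfF⟩ := exists_contDiffOn_ae_eq isOpen_Ioo fun _ hu =>
    exists_local_contDiffOn_of_angleDefect_ae_eq_zero hf hdef hu
  exact ⟨F, hF, hfF, Measure.eqOn_open_of_ae_eq ((angleDefect_congr_ae hfF).symm.trans hdef)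
    isOpen_collisionTriangle (continuousOn_angleDefect hF.continuousOn) continuousOn_const⟩

end Regularity

section Classification

theorem tendsto_inv_smul_sub_of_hasStrictDerivAt {𝕜 E ι : Type*} [NontriviallyNormedField 𝕜]
    [NormedAddCommGroup E] [NormedSpace 𝕜 E] {f : 𝕜 → E} {f' : E} {a : 𝕜} {L : Filter ι}
    {x y : ι → 𝕜} (hf : HasStrictDerivAt f f' a) (hx : Tendsto x L (𝓝 a))
    (hy : Tendsto y L (𝓝 a)) (hne : ∀ᶠ i in L, x i ≠ y i) :
    Tendsto (fun i => (x i - y i)⁻¹ • (f (x i) - f (y i))) L (𝓝 f') := by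
  have h := (hf.isLittleO.comp_tendsto (hx.prodMk_nhds hy)).tendsto_inv_smul_nhds_zero
  rw [← tendsto_sub_nhds_zero_iff]
  refine h.congr' ?_
  filter_upwards [hne] with i hi
  simp only [Function.comp_apply, ContinuousLinearMap.toSpanSingleton_apply]
  rw [smul_sub, inv_smul_smul₀ (sub_ne_zero.2 hi)]

theorem tendsto_sin_mul_div (c : ℝ) : Tendsto (fun l => sin (l * c) / l) (𝓝[≠] 0) (𝓝 c) := by
  have h : HasDerivAt (fun l : ℝ => sin (l * c)) c 0 := by
    simpa using ((hasDerivAt_id (0 : ℝ)).mul_const c).sin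
  simpa [slope_fun_def_field] using h.tendsto_slope

theorem tendsto_sin_mul_mul_cos_div_sin (t : ℝ) {d : ℝ} (hd : d ≠ 0) :
    Tendsto (fun l => sin (l * t) * cos (l * d) / sin (l * d)) (𝓝[≠] 0) (𝓝 (t / d)) := by
  have hcos : Tendsto (fun l => cos (l * d)) (𝓝[≠] 0) (𝓝 1) := by
    have h : Tendsto (fun l => cos (l * d)) (𝓝 0) (𝓝 (cos (0 * d))) :=
      Continuous.tendsto (by fun_prop) 0
    simpa using h.mono_left nhdsWithin_le_nhds
  have h := ((tendsto_sin_mul_div t).mul hcos).div (tendsto_sin_mul_div d) hd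
  rw [mul_one] at h
  refine h.congr' ?_
  filter_upwards [self_mem_nhdsWithin] with l hl
  simp only [Pi.div_apply]
  field_simp [show l ≠ 0 from hl]

theorem shiftAngle_sub_add {σ δ τ : ℝ} (hδ : cos δ ≠ 0) (hτ : τ ∈ Icc (-(π / 2)) (π / 2))
    (h : cos σ * sin δ = sin τ * cos δ) : shiftAngle (σ - δ, σ + δ) = τ := by
  have hsub : (σ + δ - (σ - δ)) / 2 = δ := by ring
  have hadd : (σ - δ + (σ + δ)) / 2 = σ := by ring
  refine shiftAngle_eq_of_sin_mul_cos ?_ hτ ?_ <;> simp only [hsub, hadd]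
  · exact hδ
  · rw [← h, mul_comm]

theorem exists_tendsto_cos_mul_sin_eq {d t : ℝ} (hd : 0 < d) (ht : |t| < d) :
    ∃ σ : ℝ → ℝ, Tendsto σ (𝓝[>] 0) (𝓝 (arccos (t / d))) ∧
      ∀ᶠ l in 𝓝[>] 0, cos (σ l) * sin (l * d) = sin (l * t) * cos (l * d) := by
  let r : ℝ → ℝ := fun l => sin (l * t) * cos (l * d) / sin (l * d)
  have hr : Tendsto r (𝓝[>] 0) (𝓝 (t / d)) :=
    (tendsto_sin_mul_mul_cos_div_sin t hd.ne').mono_left (nhdsGT_le_nhdsNE 0)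
  have htd : -1 < t / d ∧ t / d < 1 := by rwa [← abs_lt, abs_div, abs_of_pos hd, div_lt_one hd]
  refine ⟨fun l => arccos (r l), (continuous_arccos.tendsto _).comp hr, ?_⟩
  filter_upwards [hr.eventually_const_lt htd.1, hr.eventually_lt_const htd.2,
    Ioo_mem_nhdsGT (div_pos pi_pos hd)] with l hl₁ hl₂ hl
  have hsin : 0 < sin (l * d) :=
    sin_pos_of_pos_of_lt_pi (mul_pos hl.1 hd) ((lt_div_iff₀ hd).1 hl.2)
  rw [cos_arccos hl₁.le hl₂.le, div_mul_cancel₀ _ hsin.ne']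

variable {E : Type*}

theorem sub_eq_sub_of_angleDefect_eq_zero [AddCommGroup E] {F : ℝ → E} {σ δ τ : ℝ}
    (hδ : cos δ ≠ 0) (hτ : τ ∈ Icc (-(π / 2)) (π / 2)) (h : cos σ * sin δ = sin τ * cos δ)
    (hF : angleDefect F (σ - δ, σ + δ) = 0) :
    F (σ + δ) - F (σ - δ) = F (δ + τ) - F (π - (δ - τ)) := by
  have hin : inAngle (σ - δ, σ + δ) = δ + τ := by
    rw [inAngle, shiftAngle_sub_add hδ hτ h]
    ring
  have hout : outAngle (σ - δ, σ + δ) = π - (δ - τ) := by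
    rw [outAngle, shiftAngle_sub_add hδ hτ h]
    ring
  rw [angleDefect, hin, hout] at hF
  rw [← sub_eq_zero, ← neg_eq_zero, ← hF]
  abel

-- The collisions between `σ - δ` and `σ + δ` send the other two angles to the ends of `(0, π)` as
-- `δ → 0`; prescribing the rates `d + t` and `d - t` of approach determines the limit of `σ`.
theorem tendsto_inv_smul_sub_of_angleDefect_eq_zero [NormedAddCommGroup E] [NormedSpace ℝ E]
    {F : ℝ → E} (hF : ContDiffOn ℝ 1 F (Ioo 0 π))
    (hdef : ∀ p ∈ collisionTriangle, angleDefect F p = 0) {d t : ℝ} (hd : 0 < d) (ht : |t| < d) :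
    Tendsto (fun l => l⁻¹ • (F (l * d + l * t) - F (π - (l * d - l * t)))) (𝓝[>] 0)
      (𝓝 ((2 * d) • deriv F (arccos (t / d)))) := by
  obtain ⟨σ, hσ, hσeq⟩ := exists_tendsto_cos_mul_sin_eq hd ht
  have hmem : arccos (t / d) ∈ Ioo 0 π := by
    rwa [mem_Ioo, arccos_pos, arccos_lt_pi, and_comm, ← abs_lt, abs_div, abs_of_pos hd,
      div_lt_one hd]
  have hδ : Tendsto (fun l => l * d) (𝓝[>] 0) (𝓝 0) := by
    have h : Tendsto (fun l => l * d) (𝓝 0) (𝓝 (0 * d)) := Continuous.tendsto (by fun_prop) 0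
    simpa using h.mono_left nhdsWithin_le_nhds
  have hadd : Tendsto (fun l => σ l + l * d) (𝓝[>] 0) (𝓝 (arccos (t / d))) := by
    simpa using hσ.add hδ
  have hsub : Tendsto (fun l => σ l - l * d) (𝓝[>] 0) (𝓝 (arccos (t / d))) := by
    simpa using hσ.sub hδ
  have hne : ∀ᶠ l in 𝓝[>] (0 : ℝ), σ l + l * d ≠ σ l - l * d := by
    filter_upwards [self_mem_nhdsWithin] with l hl
    linarith [mul_pos hl hd]
  have hlim := tendsto_inv_smul_sub_of_hasStrictDerivAt
    ((hF.contDiffAt (isOpen_Ioo.mem_nhds hmem)).hasStrictDerivAt one_ne_zero) hadd hsub hne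
  refine (hlim.const_smul (2 * d)).congr' ?_
  filter_upwards [self_mem_nhdsWithin, hadd.eventually_lt_const hmem.2,
    hsub.eventually_const_lt hmem.1, hσeq] with l hl hadd_lt hsub_pos hl_eq
  have hl : 0 < l := hl
  have hlt : |l * t| ≤ l * d := by
    rw [abs_mul, abs_of_pos hl]
    gcongr
  have hcos : cos (l * d) ≠ 0 :=
    (cos_pos_of_mem_Ioo ⟨by linarith [mul_pos hl hd], by linarith⟩).ne'
  have hscale : 2 * d * (σ l + l * d - (σ l - l * d))⁻¹ = l⁻¹ := by
    rw [add_sub_sub_cancel]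
    field_simp
    norm_num
  rw [smul_smul, hscale, sub_eq_sub_of_angleDefect_eq_zero hcos
    (abs_le.1 (hlt.trans (by linarith))) hl_eq
    (hdef _ ⟨hsub_pos, by dsimp only; linarith [mul_pos hl hd], hadd_lt⟩)]

theorem exists_eq_smul_add_smul_of_homogeneous [AddCommGroup E] [Module ℝ E] {N : ℝ → ℝ → E}
    (hom : ∀ l p q, 0 < l → 0 < p → 0 < q → N (l * p) (l * q) = l • N p q)
    (sep : ∀ p p' q q', 0 < p → 0 < p' → 0 < q → 0 < q' → N p q + N p' q' = N p q' + N p' q) :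
    ∃ A B : E, ∀ p q, 0 < p → 0 < q → N p q = p • A + q • B := by
  have hmul : ∀ l p, 0 < l → 0 < p → N (l * p) 1 + l • N 1 1 = l • N p 1 + N l 1 := by
    intro l p hl hp
    have h := sep (l * p) l 1 l (by positivity) hl one_pos hl
    have h₁ := hom l p 1 hl hp one_pos
    have h₂ := hom l 1 1 hl one_pos one_pos
    rw [mul_one] at h₁ h₂
    rwa [h₁, h₂] at h
  have hone : ∀ p, 0 < p → N p 1 = p • (N 2 1 - N 1 1) + ((2 : ℝ) • N 1 1 - N 2 1) := by
    intro p hp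
    have h := hmul 2 p two_pos hp
    have h' := hmul p 2 hp two_pos
    rw [mul_comm] at h'
    linear_combination (norm := module) h' - h
  refine ⟨N 2 1 - N 1 1, (2 : ℝ) • N 1 1 - N 2 1, fun p q hp hq => ?_⟩
  have h := hom q (p / q) 1 hq (by positivity) one_pos
  rw [mul_one, mul_div_cancel₀ _ hq.ne', hone _ (by positivity), smul_add, smul_smul,
    mul_div_cancel₀ _ hq.ne'] at h
  exact h

theorem exists_eq_add_smul_add_sin_smul [NormedAddCommGroup E] [NormedSpace ℝ E] {s : Set ℝ}
    (hs : IsOpen s) (hs' : IsPreconnected s) {F : ℝ → E} {a b : E}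
    (hF : ∀ x ∈ s, HasDerivAt F (a + cos x • b) x) :
    ∃ c, ∀ x ∈ s, F x = c + x • a + sin x • b := by
  have hG : ∀ x ∈ s, HasDerivAt (fun x => F x - (x • a + sin x • b)) 0 x := by
    intro x hx
    have h := (hF x hx).sub (((hasDerivAt_id x).smul_const a).add
      ((hasDerivAt_sin x).smul_const b))
    rwa [one_smul, sub_self] at h
  obtain ⟨c, hc⟩ := hs.exists_is_const_of_deriv_eq_zero hs'
    (fun x hx => (hG x hx).differentiableAt.differentiableWithinAt) fun x hx => (hG x hx).deriv
  exact ⟨c, fun x hx => by rw [← hc x hx]; abel⟩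

variable [NormedAddCommGroup E] [NormedSpace ℝ E]

theorem exists_deriv_eq_add_cos_smul {F : ℝ → E} (hF : ContDiffOn ℝ 1 F (Ioo 0 π))
    (hdef : ∀ p ∈ collisionTriangle, angleDefect F p = 0) :
    ∃ a b : E, ∀ x ∈ Ioo 0 π, deriv F x = a + cos x • b := by
  have hlim : ∀ p q, 0 < p → 0 < q →
      Tendsto (fun l => l⁻¹ • (F (l * p) - F (π - l * q))) (𝓝[>] 0)
        (𝓝 ((p + q) • deriv F (arccos ((p - q) / (p + q))))) := by
    intro p q hp hq
    have h := tendsto_inv_smul_sub_of_angleDefect_eq_zero hF hdef (d := (p + q) / 2)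
      (t := (p - q) / 2) (by linarith) (abs_lt.2 ⟨by linarith, by linarith⟩)
    rw [mul_div_cancel₀ _ two_ne_zero, div_div_div_cancel_right₀ two_ne_zero] at h
    refine h.congr fun l => ?_
    ring_nf
  obtain ⟨A, B, hAB⟩ := exists_eq_smul_add_smul_of_homogeneous
    (N := fun p q => (p + q) • deriv F (arccos ((p - q) / (p + q))))
    (fun l p q hl _ _ => by
      simp only [← mul_sub, ← mul_add, mul_div_mul_left _ _ hl.ne', mul_smul])
    (fun p p' q q' hp hp' hq hq' => by
      refine tendsto_nhds_unique ((hlim p q hp hq).add (hlim p' q' hp' hq')) ?_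
      refine ((hlim p q' hp hq').add (hlim p' q hp' hq)).congr fun l => ?_
      module)
  refine ⟨(2⁻¹ : ℝ) • (A + B), (2⁻¹ : ℝ) • (A - B), fun x hx => ?_⟩
  obtain ⟨hlt_cos, hcos_lt⟩ := mapsTo_cos_Ioo hx
  have h := hAB (1 + cos x) (1 - cos x) (by linarith) (by linarith)
  have hsum : 1 + cos x + (1 - cos x) = 2 := by ring
  have hquot : (1 + cos x - (1 - cos x)) / 2 = cos x := by ring
  rw [hsum, hquot, arccos_cos hx.1.le hx.2.le] at h
  linear_combination (norm := module) (2⁻¹ : ℝ) • h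

theorem exists_eq_add_sin_smul_of_angleDefect_eq_zero {F : ℝ → E}
    (hF : ContDiffOn ℝ 1 F (Ioo 0 π)) (hdef : ∀ p ∈ collisionTriangle, angleDefect F p = 0) :
    ∃ c b : E, ∀ x ∈ Ioo 0 π, F x = c + sin x • b := by
  obtain ⟨a, b, hab⟩ := exists_deriv_eq_add_cos_smul hF hdef
  obtain ⟨c, hc⟩ := exists_eq_add_smul_add_sin_smul isOpen_Ioo isPreconnected_Ioo
    fun x hx => hab x hx ▸ ((hF.differentiableOn one_ne_zero).differentiableAt
      (isOpen_Ioo.mem_nhds hx)).hasDerivAt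
  have hmem : (π / 3, π / 2) ∈ collisionTriangle := by
    refine ⟨?_, ?_, ?_⟩ <;> dsimp only <;> linarith [pi_pos]
  have hπ : π • a = 0 := by
    rw [← neg_eq_zero, ← angleDefect_add_smul_add_sin_smul c a b hmem, ← hdef _ hmem]
    exact (eqOn_angleDefect hc hmem).symm
  refine ⟨c, b, fun x hx => ?_⟩
  rw [hc x hx, (smul_eq_zero.1 hπ).resolve_left pi_ne_zero, smul_zero, add_zero]

theorem angleDefect_ae_eq_zero_iff [CompleteSpace E] {f : ℝ → E}
    (hf : LocallyIntegrableOn f (Ioo 0 π)) :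
    angleDefect f =ᵐ[volume.restrict collisionTriangle] 0 ↔
      ∃ a b : E, f =ᵐ[volume.restrict (Ioo 0 π)] fun x => a + sin x • b := by
  constructor
  · intro hdef
    obtain ⟨F, hF, hfF, hdefF⟩ := exists_contDiffOn_of_angleDefect_ae_eq_zero hf hdef
    obtain ⟨a, b, hab⟩ := exists_eq_add_sin_smul_of_angleDefect_eq_zero hF hdefF
    exact ⟨a, b, hfF.trans (ae_restrict_of_forall_mem measurableSet_Ioo hab)⟩
  · rintro ⟨a, b, hab⟩
    refine (angleDefect_congr_ae hab).trans
      (ae_restrict_of_forall_mem isOpen_collisionTriangle.measurableSet fun p hp => ?_)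
    simpa using angleDefect_add_smul_add_sin_smul a 0 b hp

end Classification

section HalfAngle

theorem quasiMeasurePreserving_of_forall_exists_eq {α β ι : Type*} [MeasurableSpace α]
    [MeasurableSpace β] [Countable ι] {μ : Measure α} {ν : Measure β} {g : α → β} {k : ι → α → β}
    (hg : Measurable g) (hk : ∀ i, Measure.QuasiMeasurePreserving (k i) μ ν)
    (h : ∀ x, ∃ i, g x = k i x) : Measure.QuasiMeasurePreserving g μ ν := by
  refine ⟨hg, Measure.AbsolutelyContinuous.mk fun N hN hN₀ => ?_⟩
  rw [Measure.map_apply hg hN]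
  refine measure_mono_null ?_ (measure_iUnion_null fun i => (hk i).preimage_null hN₀)
  intro x hx
  obtain ⟨i, hi⟩ := h x
  exact mem_iUnion.2 ⟨i, by rwa [mem_preimage, ← hi]⟩

theorem ae_comp_iff {α β : Type*} [MeasurableSpace α] [MeasurableSpace β] {μ : Measure α}
    {ν : Measure β} {g : α → β} {g' : β → α} (hg : Measure.QuasiMeasurePreserving g μ ν)
    (hg' : Measure.QuasiMeasurePreserving g' ν μ) (h : ∀ᵐ y ∂ν, g (g' y) = y) {P : β → Prop} :
    (∀ᵐ x ∂μ, P (g x)) ↔ ∀ᵐ y ∂ν, P y := by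
  refine ⟨fun hP => ?_, fun hP => hg.ae hP⟩
  filter_upwards [hg'.ae hP, h] with y hy hyy
  rwa [hyy] at hy

theorem locallyIntegrableOn_comp_mul_left {E : Type*} [NormedAddCommGroup E] {f : ℝ → E}
    {s : Set ℝ} (hf : LocallyIntegrableOn f s) {a : ℝ} (ha : a ≠ 0) :
    LocallyIntegrableOn (fun x => f (a * x)) ((a * ·) ⁻¹' s) := by
  intro x hx
  obtain ⟨W, hW, hfW⟩ := hf (a * x) hx
  refine ⟨(a * ·) ⁻¹' W,
    (continuous_const_mul a).continuousWithinAt.tendsto_nhdsWithin (mapsTo_preimage _ _) hW, ?_⟩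
  refine (Homeomorph.mulLeft₀ a ha).measurableEmbedding.integrableOn_map_iff.1 ?_
  rw [Homeomorph.coe_mulLeft₀, Real.map_volume_mul_left ha, IntegrableOn, Measure.restrict_smul]
  exact hfW.smul_measure ENNReal.ofReal_ne_top

/-- The representative of `x / 2` modulo `π` in `[0, π)`. -/
def halfAngle (x : ℝ) : ℝ := mod2pi x / 2

theorem mod2pi_eq_toIcoMod (x : ℝ) : mod2pi x = toIcoMod two_pi_pos 0 x := by
  rw [mod2pi, toIcoMod, toIcoDiv_eq_floor, sub_zero, zsmul_eq_mul, mul_comm]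

theorem mod2pi_mem (x : ℝ) : mod2pi x ∈ Ico 0 (2 * π) := by
  rw [mod2pi_eq_toIcoMod]
  exact toIcoMod_mem_Ico' _ _

theorem mod2pi_eq_self {x : ℝ} (hx : x ∈ Ico 0 (2 * π)) : mod2pi x = x := by
  rw [mod2pi_eq_toIcoMod, toIcoMod_eq_self, zero_add]
  exact hx

theorem halfAngle_mem (x : ℝ) : halfAngle x ∈ Ico 0 π := by
  obtain ⟨h₀, h₁⟩ := mod2pi_mem x
  constructor <;> rw [halfAngle] <;> linarith

theorem halfAngle_two_mul {t : ℝ} (ht : t ∈ Ico 0 π) : halfAngle (2 * t) = t := by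
  rw [halfAngle, mod2pi_eq_self ⟨by linarith [ht.1], by linarith [ht.2]⟩,
    mul_div_cancel_left₀ _ two_ne_zero]

theorem sin_halfAngle (x : ℝ) : sin (halfAngle x) = |sin (x / 2)| := by
  have h : halfAngle x = x / 2 - ⌊x / (2 * π)⌋ * π := by
    rw [halfAngle, mod2pi]
    ring
  rw [← abs_of_nonneg (sin_nonneg_of_nonneg_of_le_pi (halfAngle_mem x).1 (halfAngle_mem x).2.le),
    h, sin_sub_int_mul_pi, abs_mul, abs_neg_one_zpow, one_mul]

theorem measurable_halfAngle : Measurable halfAngle := by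
  unfold halfAngle mod2pi
  fun_prop

theorem quasiMeasurePreserving_halfAngle :
    Measure.QuasiMeasurePreserving halfAngle volume (volume.restrict (Ioo 0 π)) := by
  have hk : ∀ n : ℤ,
      Measure.QuasiMeasurePreserving (fun x : ℝ => (x - 2 * π * n) / 2) volume volume := by
    intro n
    simpa using quasiMeasurePreserving_restrict_of_leftInvOn (μ := volume) (s := univ) (t := univ)
      (g' := fun y : ℝ => 2 * y + 2 * π * n) (g := fun x : ℝ => (x - 2 * π * n) / 2)
      (by fun_prop) (mapsTo_univ _ _) (by fun_prop) fun x _ => by ring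
  have h := quasiMeasurePreserving_of_forall_exists_eq measurable_halfAngle hk
    fun x => ⟨⌊x / (2 * π)⌋, rfl⟩
  rw [Measure.restrict_congr_set Ioo_ae_eq_Ico]
  simpa only [Measure.restrict_univ] using h.restrict (s := univ) fun x _ => halfAngle_mem x

theorem quasiMeasurePreserving_two_mul :
    Measure.QuasiMeasurePreserving (fun t : ℝ => 2 * t) (volume.restrict (Ioo 0 π)) volume := by
  simpa using quasiMeasurePreserving_restrict_of_leftInvOn (μ := volume) (t := univ)
      (g := fun t : ℝ => 2 * t) (g' := fun x => x / 2) (by fun_prop) (mapsTo_univ _ _)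
      (by fun_prop) fun x _ => by ring

theorem ae_halfAngle_iff {P : ℝ → Prop} :
    (∀ᵐ x, P (halfAngle x)) ↔ ∀ᵐ t ∂volume.restrict (Ioo 0 π), P t :=
  ae_comp_iff quasiMeasurePreserving_halfAngle quasiMeasurePreserving_two_mul
    (ae_restrict_of_forall_mem measurableSet_Ioo fun _ ht =>
      halfAngle_two_mul (Ioo_subset_Ico_self ht))

theorem ae_map_halfAngle_iff {P : ℝ × ℝ → Prop} :
    (∀ᵐ p : ℝ × ℝ, P (Prod.map halfAngle halfAngle p)) ↔
      ∀ᵐ p ∂volume.restrict (Ioo 0 π ×ˢ Ioo 0 π), P p := by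
  rw [Measure.volume_eq_prod, ← Measure.prod_restrict]
  have hhalf := quasiMeasurePreserving_halfAngle
  have htwo := quasiMeasurePreserving_two_mul
  refine ae_comp_iff (QuasiMeasurePreserving.prodMap hhalf hhalf)
    (QuasiMeasurePreserving.prodMap htwo htwo) ?_
  rw [Measure.prod_restrict]
  refine ae_restrict_of_forall_mem (measurableSet_Ioo.prod measurableSet_Ioo) fun p hp => ?_
  exact Prod.ext (halfAngle_two_mul (Ioo_subset_Ico_self hp.1))
    (halfAngle_two_mul (Ioo_subset_Ico_self hp.2))

end HalfAngle

section Reduction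

variable {E : Type*}

/-- The left-hand side of the equation defining collisional invariants. -/
def collisionDefect [AddCommGroup E] (ψ : ℝ → E) (p : ℝ × ℝ) : E :=
  ψ p.1 + ψ (hFPU p.1 p.2) - ψ p.2 - ψ (p.1 - p.2 + hFPU p.1 p.2)

theorem hFPU_of_mem {x z : ℝ} (hx : x ∈ Ico 0 (2 * π)) (hz : z ∈ Ico 0 (2 * π)) :
    hFPU x z = h0 x z := by
  rw [hFPU, mod2pi_eq_self hx, mod2pi_eq_self hz, sub_self, sub_zero]

theorem h0_two_mul_of_le {p : ℝ × ℝ} (hp : p.1 ≤ p.2) : h0 (2 * p.1) (2 * p.2) = 2 * inAngle p := by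
  rw [h0, inAngle, shiftAngle, abs_of_nonneg (by linarith)]
  ring_nf

theorem h0_two_mul_of_ge {p : ℝ × ℝ} (hp : p.1 ≤ p.2) :
    h0 (2 * p.2) (2 * p.1) = 2 * outAngle p - 2 * π := by
  rw [h0, outAngle, shiftAngle, abs_of_nonpos (by linarith)]
  ring_nf

variable [AddCommGroup E] {ψ : ℝ → E} {p : ℝ × ℝ}

theorem collisionDefect_map_mod2pi (hψ : Function.Periodic ψ (2 * π)) (p : ℝ × ℝ) :
    collisionDefect ψ (mod2pi p.1, mod2pi p.2) = collisionDefect ψ p := by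
  obtain ⟨x, z⟩ := p
  have hsub : ∀ y (n : ℤ), ψ (y - 2 * π * n) = ψ y := fun y n => by
    rw [mul_comm, hψ.sub_int_mul_eq]
  have hin : ψ (h0 (mod2pi x) (mod2pi z)) = ψ (hFPU x z) := by
    rw [← hsub _ ⌊x / (2 * π)⌋, hFPU, mod2pi]
    ring_nf
  have hout : ψ (mod2pi x - mod2pi z + h0 (mod2pi x) (mod2pi z)) = ψ (x - z + hFPU x z) := by
    rw [← hsub _ ⌊z / (2 * π)⌋, hFPU]
    congr 1
    simp only [mod2pi]
    ring
  rw [collisionDefect, collisionDefect, hFPU_of_mem (mod2pi_mem x) (mod2pi_mem z)]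
  dsimp only
  rw [hin, hout, mod2pi, mod2pi, hsub, hsub]

theorem collisionDefect_two_mul (hψ : Function.Periodic ψ (2 * π)) (hp : p ∈ collisionTriangle) :
    collisionDefect ψ (2 * p.1, 2 * p.2) = angleDefect (fun t => ψ (2 * t)) p := by
  obtain ⟨hu, huv, hv⟩ := hp
  have hout : 2 * p.1 - 2 * p.2 + 2 * inAngle p = 2 * outAngle p - 2 * π := by
    linarith [fst_add_inAngle_add_pi p]
  rw [collisionDefect, angleDefect, hFPU_of_mem ⟨by linarith, by linarith⟩
    ⟨by linarith, by linarith⟩, h0_two_mul_of_le huv.le, hout, hψ.sub_eq]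

theorem collisionDefect_two_mul_swap (hψ : Function.Periodic ψ (2 * π))
    (hp : p ∈ collisionTriangle) :
    collisionDefect ψ (2 * p.2, 2 * p.1) = -angleDefect (fun t => ψ (2 * t)) p := by
  obtain ⟨hu, huv, hv⟩ := hp
  have hin : 2 * p.2 - 2 * p.1 + (2 * outAngle p - 2 * π) = 2 * inAngle p := by
    linarith [fst_add_inAngle_add_pi p]
  rw [collisionDefect, angleDefect, hFPU_of_mem ⟨by linarith, by linarith⟩
    ⟨by linarith, by linarith⟩, h0_two_mul_of_ge huv.le, hin, hψ.sub_eq]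
  abel

theorem collisionDefect_diag (x : ℝ) : collisionDefect ψ (x, x) = 0 := by
  rw [collisionDefect]
  simp

theorem ae_collisionDefect_eq_zero_iff (hψ : Function.Periodic ψ (2 * π)) :
    (∀ᵐ p, collisionDefect ψ p = 0) ↔
      angleDefect (fun t => ψ (2 * t)) =ᵐ[volume.restrict collisionTriangle] 0 := by
  have hhalf : ∀ p : ℝ × ℝ, collisionDefect ψ p =
      collisionDefect ψ (2 * (Prod.map halfAngle halfAngle p).1,
        2 * (Prod.map halfAngle halfAngle p).2) := by
    intro p
    rw [← collisionDefect_map_mod2pi hψ]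
    simp only [Prod.map_fst, Prod.map_snd, halfAngle, mul_div_cancel₀ _ (two_ne_zero' ℝ)]
  have hmeas := isOpen_collisionTriangle.measurableSet
  rw [eventually_congr (Eventually.of_forall fun p => by rw [hhalf p]),
    ae_map_halfAngle_iff (P := fun p => collisionDefect ψ (2 * p.1, 2 * p.2) = 0)]
  refine ⟨fun h => ?_, fun h => ?_⟩
  · filter_upwards [ae_restrict_of_ae_restrict_of_subset collisionTriangle_subset h,
      ae_restrict_mem hmeas] with p hp hmem
    rwa [collisionDefect_two_mul hψ hmem] at hp
  · have h := (ae_restrict_iff' hmeas).1 h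
    have hswap := (Measure.measurePreserving_swap (μ := (volume : Measure ℝ))
      (ν := (volume : Measure ℝ))).quasiMeasurePreserving.ae h
    filter_upwards [ae_restrict_of_ae h, ae_restrict_of_ae hswap,
      ae_restrict_mem (measurableSet_Ioo.prod measurableSet_Ioo)] with p hp hps ⟨hu, hv⟩
    rcases lt_trichotomy p.1 p.2 with hlt | heq | hgt
    · have hmem : p ∈ collisionTriangle := ⟨hu.1, hlt, hv.2⟩
      rw [collisionDefect_two_mul hψ hmem, hp hmem, Pi.zero_apply]
    · rw [heq, collisionDefect_diag]
    · have hmem : p.swap ∈ collisionTriangle := ⟨hv.1, hgt, hu.2⟩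
      have h := collisionDefect_two_mul_swap hψ hmem
      rwa [hps hmem, Pi.zero_apply, neg_zero] at h

end Reduction

theorem collisional_invariants_characterization_general {E : Type*} [NormedAddCommGroup E]
    [NormedSpace ℝ E] [CompleteSpace E] (ψ : ℝ → E) (hper : Function.Periodic ψ (2 * π))
    (hint : LocallyIntegrableOn ψ (Ioo 0 (2 * π))) :
    (∀ᵐ p : ℝ × ℝ,
        ψ p.1 + ψ (hFPU p.1 p.2) - ψ p.2 - ψ (p.1 - p.2 + hFPU p.1 p.2) = 0) ↔
      ∃ c₁ c₂ : E, ∀ᵐ x : ℝ, ψ x = c₁ + |sin (x / 2)| • c₂ := by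
  have hf : LocallyIntegrableOn (fun t => ψ (2 * t)) (Ioo 0 π) := by
    simpa [preimage_const_mul_Ioo] using locallyIntegrableOn_comp_mul_left hint two_ne_zero
  have hhalf : ∀ x, ψ x = ψ (2 * halfAngle x) := fun x => by
    rw [halfAngle, mul_div_cancel₀ _ two_ne_zero, mod2pi, mul_comm, hper.sub_int_mul_eq]
  calc (∀ᵐ p, collisionDefect ψ p = 0)
      ↔ angleDefect (fun t => ψ (2 * t)) =ᵐ[volume.restrict collisionTriangle] 0 :=
        ae_collisionDefect_eq_zero_iff hper
    _ ↔ ∃ c₁ c₂ : E, ∀ᵐ t ∂volume.restrict (Ioo 0 π), ψ (2 * t) = c₁ + sin t • c₂ :=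
        angleDefect_ae_eq_zero_iff hf
    _ ↔ ∃ c₁ c₂ : E, ∀ᵐ x : ℝ, ψ x = c₁ + |sin (x / 2)| • c₂ := by
        simp_rw [← ae_halfAngle_iff, ← hhalf, sin_halfAngle]

/-- **Theorem 2.2 (collisional invariants).**  A `2π`-periodic, locally integrable
`ψ : ℝ → ℂ` satisfies `ψ(x) + ψ(h(x,z)) − ψ(z) − ψ(x−z+h(x,z)) = 0` for a.e. `(x,z) ∈ ℝ²`
if and only if `ψ(x) = c₁ + c₂ |sin(x/2)|` a.e. for some constants `c₁, c₂ ∈ ℂ`. -/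
theorem collisional_invariants_characterization
    (ψ : ℝ → ℂ) (hper : Function.Periodic ψ (2 * π))
    (hint : IntegrableOn ψ II) :
    (∀ᵐ p : ℝ × ℝ,
        ψ p.1 + ψ (hFPU p.1 p.2) - ψ p.2 - ψ (p.1 - p.2 + hFPU p.1 p.2) = 0) ↔
      ∃ c₁ c₂ : ℂ, ∀ᵐ x : ℝ, ψ x = c₁ + c₂ * (|Real.sin (x / 2)| : ℝ) := by
  simpa only [Complex.real_smul, mul_comm] using collisional_invariants_characterization_general ψ
    hper (hint.mono_set Ioo_subset_Ico_self).locallyIntegrableOn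
end
end

section
/- Let G : ℝ³ → ℂ be 2π-periodic in each variable and continuous. Then the limit as ε → 0⁺ of ∫_{U₋} δ_ε(Ω(x,y,z)) G(x,y,z) dx dy dz exists and equals ∫_{I²} (2 / √(F₊(x,z))) · G(x, h(x,z), z) dx dz. -/
open MeasureTheory Real Set Filter
open scoped Topology ENNReal ComplexConjugate

noncomputable section

/-- The regularized delta function `δ_ε(X) = (ε/π)/(ε² + X²)`. -/
def deltaE (ε X : ℝ) : ℝ := (ε / π) / (ε ^ 2 + X ^ 2)

/-- The set `U₋ = {(x,y,z) ∈ [0,2π]³ : z ≥ x+y or z ≤ x+y−2π}` as a subset of `ℝ³`. -/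
def Uminus : Set (ℝ × ℝ × ℝ) :=
  {p | p.1 ∈ Set.Icc 0 (2 * π) ∧ p.2.1 ∈ Set.Icc 0 (2 * π) ∧ p.2.2 ∈ Set.Icc 0 (2 * π) ∧
    (p.1 + p.2.1 ≤ p.2.2 ∨ p.2.2 ≤ p.1 + p.2.1 - 2 * π)}

/-!
Fix `(x, z)` with `x ≠ z` in the open cell and integrate over `y` first. The admissible `y` form one
interval, on which `y ↦ Ω(x, y, z)` is, up to a constant factor and an affine change of variable,
`sin θ - sin θ₀` with `|θ|, |θ₀| ≤ π/2`. It therefore has a single zero, at `h(x, z)` modulo `2π`,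
with slope `±√F₊(x, z) / 2`, and `|Ω|` is at least `1/π` times the size of its linearization there.
Substituting `y = y₀ + ε s` around the zero `y₀`, the inner integral tends to
`2 / √F₊(x, z) • G(x, y₀, z)`, and the linear lower bound dominates it by a multiple of
`2 / √F₊(x, z)` uniformly in `ε`. Since `F₊(x, z) ≥ 4 sin(x/2) sin(z/2)`, this bound is integrable
over the cell.
-/

section DeltaE

lemma deltaE_nonneg {ε : ℝ} (hε : 0 ≤ ε) (X : ℝ) : 0 ≤ deltaE ε X := by
  unfold deltaE
  positivity

lemma deltaE_le_deltaE {ε X Y : ℝ} (hε : 0 < ε) (h : |X| ≤ |Y|) : deltaE ε Y ≤ deltaE ε X := by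
  unfold deltaE
  have h_sq : X ^ 2 ≤ Y ^ 2 := sq_le_sq.2 h
  gcongr

lemma mul_deltaE {ε : ℝ} (hε : 0 < ε) (X : ℝ) : ε * deltaE ε X = deltaE 1 (ε⁻¹ * X) := by
  unfold deltaE
  field_simp

lemma continuous_deltaE {ε : ℝ} (hε : ε ≠ 0) : Continuous (deltaE ε) := by
  unfold deltaE
  exact continuous_const.div (by fun_prop) fun X ↦ by positivity

lemma deltaE_one (X : ℝ) : deltaE 1 X = π⁻¹ * (1 + X ^ 2)⁻¹ := by
  simp only [deltaE, one_pow, div_eq_mul_inv, one_mul]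

lemma deltaE_eq {ε : ℝ} (hε : 0 < ε) : deltaE ε = fun X ↦ ε⁻¹ * deltaE 1 (ε⁻¹ * X) := by
  ext X
  rw [← mul_deltaE hε, inv_mul_cancel_left₀ hε.ne']

lemma integrable_deltaE {ε : ℝ} (hε : 0 < ε) : Integrable (deltaE ε) := by
  have h_one : Integrable (deltaE 1) := by
    simpa only [funext deltaE_one] using integrable_inv_one_add_sq.const_mul π⁻¹
  rw [deltaE_eq hε]
  exact (h_one.comp_mul_left' (inv_ne_zero hε.ne')).const_mul ε⁻¹

lemma integral_deltaE {ε : ℝ} (hε : 0 < ε) : ∫ X, deltaE ε X = 1 := by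
  have h_one : ∫ X, deltaE 1 X = 1 := by
    simp only [deltaE_one, integral_const_mul, integral_univ_inv_one_add_sq]
    exact inv_mul_cancel₀ pi_ne_zero
  rw [deltaE_eq hε, integral_const_mul, Measure.integral_comp_mul_left (deltaE 1), h_one, inv_inv,
    abs_of_pos hε, smul_eq_mul, mul_one, inv_mul_cancel₀ hε.ne']

lemma integrable_deltaE_comp_mul {ε k : ℝ} (hε : 0 < ε) (hk : k ≠ 0) :
    Integrable fun y ↦ deltaE ε (k * y) :=
  (integrable_deltaE hε).comp_mul_left' hk

lemma integral_deltaE_comp_mul {ε : ℝ} (hε : 0 < ε) (k : ℝ) :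
    ∫ y, deltaE ε (k * y) = |k|⁻¹ := by
  rw [Measure.integral_comp_mul_left (deltaE ε), integral_deltaE hε, smul_eq_mul, mul_one, abs_inv]

end DeltaE

section Zoom

variable {E : Type*} [NormedAddCommGroup E] [NormedSpace ℝ E]

/-- The density `f(y) dy` in the coordinate `s` given by `y = y₀ + ε s`, which blows up the scale
`ε` around `y₀` to unit size. -/
def zoom (f : ℝ → E) (y₀ ε s : ℝ) : E := ε • f (y₀ + ε * s)

lemma integral_zoom (f : ℝ → E) (y₀ : ℝ) {ε : ℝ} (hε : 0 < ε) :
    ∫ s, zoom f y₀ ε s = ∫ y, f y := by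
  simp only [zoom]
  rw [integral_smul, Measure.integral_comp_mul_left (fun t ↦ f (y₀ + t)),
    integral_add_left_eq_self, abs_of_pos (inv_pos.2 hε), smul_inv_smul₀ hε.ne']

lemma integrable_zoom {f : ℝ → E} (hf : Integrable f) (y₀ : ℝ) {ε : ℝ} (hε : ε ≠ 0) :
    Integrable (zoom f y₀ ε) :=
  ((hf.comp_add_left y₀).comp_mul_left' hε).smul ε

end Zoom

/-- `φ` has a simple zero at the interior point `y₀` of `S`, with slope `m`, and on all of `S` its
size is at least the fraction `1 / K` of that of its linearization. In particular `y₀` is the only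
zero in `S`. The constant `K` is kept separate from `m` because rescaling `φ` or its argument
changes `m` only. -/
structure HasSimpleZeroOn (K : ℝ) (φ : ℝ → ℝ) (S : Set ℝ) (y₀ m : ℝ) : Prop where
  pos : 0 < K
  mem_nhds : S ∈ 𝓝 y₀
  map_eq_zero : φ y₀ = 0
  hasDerivAt : HasDerivAt φ m y₀
  slope_ne_zero : m ≠ 0
  abs_mul_le : ∀ y ∈ S, |m * (y - y₀)| ≤ K * |φ y|

namespace HasSimpleZeroOn

variable {K y₀ m : ℝ} {φ ψ : ℝ → ℝ} {S : Set ℝ}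

lemma congr (h : HasSimpleZeroOn K φ S y₀ m) (heq : EqOn ψ φ S) :
    HasSimpleZeroOn K ψ S y₀ m where
  pos := h.pos
  mem_nhds := h.mem_nhds
  map_eq_zero := (heq (mem_of_mem_nhds h.mem_nhds)).trans h.map_eq_zero
  hasDerivAt := h.hasDerivAt.congr_of_eventuallyEq (heq.eventuallyEq_of_mem h.mem_nhds)
  slope_ne_zero := h.slope_ne_zero
  abs_mul_le y hy := by simpa only [heq hy] using h.abs_mul_le y hy

lemma const_mul {r : ℝ} (h : HasSimpleZeroOn K φ S y₀ m) (hr : r ≠ 0) :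
    HasSimpleZeroOn K (fun y ↦ r * φ y) S y₀ (r * m) where
  pos := h.pos
  mem_nhds := h.mem_nhds
  map_eq_zero := by rw [h.map_eq_zero, mul_zero]
  hasDerivAt := h.hasDerivAt.const_mul r
  slope_ne_zero := mul_ne_zero hr h.slope_ne_zero
  abs_mul_le y hy := by
    rw [mul_assoc, abs_mul, abs_mul r, mul_left_comm]
    exact mul_le_mul_of_nonneg_left (h.abs_mul_le y hy) (abs_nonneg r)

lemma comp_mul_add {k b y₁ : ℝ} (h : HasSimpleZeroOn K φ S (k * y₁ + b) m) (hk : k ≠ 0) :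
    HasSimpleZeroOn K (fun y ↦ φ (k * y + b)) ((fun y ↦ k * y + b) ⁻¹' S) y₁ (m * k) where
  pos := h.pos
  mem_nhds := (by fun_prop : Continuous fun y ↦ k * y + b).continuousAt.preimage_mem_nhds h.mem_nhds
  map_eq_zero := h.map_eq_zero
  hasDerivAt := h.hasDerivAt.comp y₁ <| by
    simpa only [mul_one, id] using ((hasDerivAt_id y₁).const_mul k).add_const b
  slope_ne_zero := mul_ne_zero h.slope_ne_zero hk
  abs_mul_le y hy := by
    convert h.abs_mul_le _ hy using 2
    ring

lemma slope_div_ne_zero (h : HasSimpleZeroOn K φ S y₀ m) : m / K ≠ 0 :=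
  div_ne_zero h.slope_ne_zero h.pos.ne'

lemma deltaE_comp_le {ε y : ℝ} (h : HasSimpleZeroOn K φ S y₀ m) (hε : 0 < ε) (hy : y ∈ S) :
    deltaE ε (φ y) ≤ deltaE ε (m / K * (y - y₀)) := by
  refine deltaE_le_deltaE hε ?_
  rw [div_mul_eq_mul_div, abs_div, abs_of_pos h.pos, div_le_iff₀' h.pos]
  exact h.abs_mul_le y hy

lemma integrable_majorant {ε : ℝ} (h : HasSimpleZeroOn K φ S y₀ m) (M : ℝ) (hε : 0 < ε) :
    Integrable fun y ↦ deltaE ε (m / K * (y - y₀)) * M :=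
  ((integrable_deltaE_comp_mul hε h.slope_div_ne_zero).comp_sub_right y₀).mul_const M

variable {E : Type*} [NormedAddCommGroup E] {H : ℝ → E} {ε M : ℝ}

lemma bound_nonneg (h : HasSimpleZeroOn K φ S y₀ m) (hM : ∀ y ∈ S, ‖H y‖ ≤ M) : 0 ≤ M :=
  (norm_nonneg _).trans (hM y₀ (mem_of_mem_nhds h.mem_nhds))

variable [NormedSpace ℝ E]

lemma norm_deltaE_smul_le {y : ℝ} (h : HasSimpleZeroOn K φ S y₀ m) (hε : 0 < ε)
    (hM : ∀ y ∈ S, ‖H y‖ ≤ M) (hy : y ∈ S) :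
    ‖deltaE ε (φ y) • H y‖ ≤ deltaE ε (m / K * (y - y₀)) * M := by
  rw [norm_smul, Real.norm_of_nonneg (deltaE_nonneg hε.le _)]
  exact mul_le_mul (h.deltaE_comp_le hε hy) (hM y hy) (norm_nonneg _) (deltaE_nonneg hε.le _)

lemma integrableOn_deltaE_smul (h : HasSimpleZeroOn K φ S y₀ m) (hS : MeasurableSet S)
    (hφ : AEMeasurable φ (volume.restrict S)) (hH : AEStronglyMeasurable H (volume.restrict S))
    (hM : ∀ y ∈ S, ‖H y‖ ≤ M) (hε : 0 < ε) :
    IntegrableOn (fun y ↦ deltaE ε (φ y) • H y) S := by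
  refine (h.integrable_majorant M hε).integrableOn.mono' ?_
    (ae_restrict_of_forall_mem hS fun y hy ↦ h.norm_deltaE_smul_le hε hM hy)
  exact ((continuous_deltaE hε.ne').measurable.comp_aemeasurable hφ).aestronglyMeasurable.smul hH

lemma norm_setIntegral_deltaE_smul_le (h : HasSimpleZeroOn K φ S y₀ m) (hS : MeasurableSet S)
    (hM : ∀ y ∈ S, ‖H y‖ ≤ M) (hε : 0 < ε) :
    ‖∫ y in S, deltaE ε (φ y) • H y‖ ≤ K / |m| * M := by
  have hM_nonneg := h.bound_nonneg hM
  have h_int := h.integrable_majorant M hε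
  calc ‖∫ y in S, deltaE ε (φ y) • H y‖
      ≤ ∫ y in S, deltaE ε (m / K * (y - y₀)) * M :=
        norm_integral_le_of_norm_le h_int.integrableOn
          (ae_restrict_of_forall_mem hS fun y hy ↦ h.norm_deltaE_smul_le hε hM hy)
    _ ≤ ∫ y, deltaE ε (m / K * (y - y₀)) * M :=
        setIntegral_le_integral h_int
          (Eventually.of_forall fun y ↦ mul_nonneg (deltaE_nonneg hε.le _) hM_nonneg)
    _ = K / |m| * M := by
        rw [integral_mul_const, integral_sub_right_eq_self (fun y ↦ deltaE ε (m / K * y)),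
          integral_deltaE_comp_mul hε, abs_div, abs_of_pos h.pos, inv_div]

lemma norm_zoom_deltaE_smul_le (h : HasSimpleZeroOn K φ S y₀ m) (hM : ∀ y ∈ S, ‖H y‖ ≤ M)
    (hε : 0 < ε) (s : ℝ) :
    ‖zoom (S.indicator fun y ↦ deltaE ε (φ y) • H y) y₀ ε s‖ ≤ deltaE 1 (m / K * s) * M := by
  unfold zoom
  by_cases hs : y₀ + ε * s ∈ S
  · rw [indicator_of_mem hs, norm_smul, Real.norm_of_nonneg hε.le]
    calc ε * ‖deltaE ε (φ (y₀ + ε * s)) • H (y₀ + ε * s)‖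
        ≤ ε * (deltaE ε (m / K * (y₀ + ε * s - y₀)) * M) :=
          mul_le_mul_of_nonneg_left (h.norm_deltaE_smul_le hε hM hs) hε.le
      _ = deltaE 1 (m / K * s) * M := by
          rw [← mul_assoc, mul_deltaE hε, add_sub_cancel_left, mul_left_comm,
            inv_mul_cancel_left₀ hε.ne']
  · rw [indicator_of_notMem hs, smul_zero, norm_zero]
    exact mul_nonneg (deltaE_nonneg zero_le_one _) (h.bound_nonneg hM)

lemma tendsto_zoom_deltaE_smul (h : HasSimpleZeroOn K φ S y₀ m) (hH : ContinuousAt H y₀) (s : ℝ) :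
    Tendsto (fun ε ↦ zoom (S.indicator fun y ↦ deltaE ε (φ y) • H y) y₀ ε s) (𝓝[>] 0)
      (𝓝 (deltaE 1 (m * s) • H y₀)) := by
  have h_point : Tendsto (fun ε ↦ y₀ + ε * s) (𝓝[>] 0) (𝓝 y₀) := by
    have : ContinuousAt (fun ε ↦ y₀ + ε * s) 0 := by fun_prop
    simpa only [ContinuousAt, zero_mul, add_zero] using this.mono_left nhdsWithin_le_nhds
  have h_quotient : Tendsto (fun ε ↦ ε⁻¹ * φ (y₀ + ε * s)) (𝓝[>] 0) (𝓝 (m * s)) := by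
    have h_deriv : HasDerivAt (fun ε ↦ φ (y₀ + ε * s)) (m * s) 0 := by
      refine HasDerivAt.comp (0 : ℝ) (by simpa using h.hasDerivAt) ?_
      simpa using ((hasDerivAt_id (0 : ℝ)).mul_const s).const_add y₀
    simpa [h.map_eq_zero] using h_deriv.tendsto_slope_zero_right
  have h_lim : Tendsto (fun ε ↦ deltaE 1 (ε⁻¹ * φ (y₀ + ε * s)) • H (y₀ + ε * s)) (𝓝[>] 0)
      (𝓝 (deltaE 1 (m * s) • H y₀)) :=
    (((continuous_deltaE one_ne_zero).tendsto _).comp h_quotient).smul (hH.tendsto.comp h_point)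
  refine h_lim.congr' ?_
  filter_upwards [self_mem_nhdsWithin, h_point.eventually_mem h.mem_nhds] with ε hε hmem
  rw [zoom, indicator_of_mem hmem, smul_smul, mul_deltaE hε]

theorem tendsto_setIntegral_deltaE_smul [CompleteSpace E] (h : HasSimpleZeroOn K φ S y₀ m)
    (hS : MeasurableSet S) (hφ : AEMeasurable φ (volume.restrict S))
    (hH : AEStronglyMeasurable H (volume.restrict S)) (hM : ∀ y ∈ S, ‖H y‖ ≤ M)
    (hcont : ContinuousAt H y₀) :
    Tendsto (fun ε ↦ ∫ y in S, deltaE ε (φ y) • H y) (𝓝[>] 0) (𝓝 (|m|⁻¹ • H y₀)) := by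
  rw [← integral_deltaE_comp_mul one_pos m, ← integral_smul_const]
  have h_zoom : ∀ ε > 0, ∫ s, zoom (S.indicator fun y ↦ deltaE ε (φ y) • H y) y₀ ε s =
      ∫ y in S, deltaE ε (φ y) • H y := fun ε hε ↦ by
    rw [integral_zoom _ _ hε, integral_indicator hS]
  refine Tendsto.congr' (eventually_mem_nhdsWithin.mono h_zoom) <|
    tendsto_integral_filter_of_dominated_convergence (fun s ↦ deltaE 1 (m / K * s) * M) ?_ ?_
      ((integrable_deltaE_comp_mul one_pos h.slope_div_ne_zero).mul_const M)
      (Eventually.of_forall (h.tendsto_zoom_deltaE_smul hcont))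
  · filter_upwards [self_mem_nhdsWithin] with ε hε
    have h_int := (h.integrableOn_deltaE_smul hS hφ hH hM hε).integrable_indicator hS
    exact (integrable_zoom h_int y₀ (ne_of_gt hε)).aestronglyMeasurable
  · filter_upwards [self_mem_nhdsWithin] with ε hε
    exact Eventually.of_forall (h.norm_zoom_deltaE_smul_le hM hε)

end HasSimpleZeroOn

section MiddleSlice

variable {α β γ E : Type*} {U : Set (α × β × γ)}

/-- The slice `{y : (x, y, z) ∈ U}` of `U`, over which the inner integral runs when a triple
integral over `U` is taken in the middle coordinate first. -/
def middleSlice (U : Set (α × β × γ)) (x : α) (z : γ) : Set β :=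
  {y | (x, y, z) ∈ U}

variable [MeasurableSpace α] [MeasurableSpace β] [MeasurableSpace γ]

lemma measurableSet_middleSlice (hU : MeasurableSet U) (x : α) (z : γ) :
    MeasurableSet (middleSlice U x z) :=
  hU.preimage (by fun_prop : Measurable fun y ↦ (x, y, z))

variable (α β γ) in
/-- The measurable equivalence `((x, z), y) ↦ (x, y, z)`, which brings a triple integral into the
form of an iterated one whose inner variable is the middle coordinate. -/
def insertMiddle : (α × γ) × β ≃ᵐ α × β × γ :=
  MeasurableEquiv.prodAssoc.trans ((MeasurableEquiv.refl α).prodCongr MeasurableEquiv.prodComm)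

variable {μ : Measure α} {ν : Measure β} {ρ : Measure γ} [NormedAddCommGroup E] {f : α × β × γ → E}

lemma integral_indicator_insertMiddle [NormedSpace ℝ E] (hU : MeasurableSet U) (q : α × γ) :
    ∫ y, U.indicator f (insertMiddle α β γ (q, y)) ∂ν =
      ∫ y in middleSlice U q.1 q.2, f (q.1, y, q.2) ∂ν := by
  rw [← integral_indicator (measurableSet_middleSlice hU q.1 q.2)]
  rfl

variable [SFinite μ] [SFinite ν] [SFinite ρ]

lemma measurePreserving_insertMiddle :
    MeasurePreserving (insertMiddle α β γ) ((μ.prod ρ).prod ν) (μ.prod (ν.prod ρ)) :=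
  ((MeasurePreserving.id μ).prod Measure.measurePreserving_swap).comp
    (measurePreserving_prodAssoc μ ρ ν)

lemma integrable_indicator_insertMiddle (hU : MeasurableSet U)
    (hf : IntegrableOn f U (μ.prod (ν.prod ρ))) :
    Integrable (fun r ↦ U.indicator f (insertMiddle α β γ r)) ((μ.prod ρ).prod ν) :=
  (measurePreserving_insertMiddle.integrable_comp_emb
    (insertMiddle α β γ).measurableEmbedding).2 (hf.integrable_indicator hU)

variable [NormedSpace ℝ E]

lemma integrable_setIntegral_middleSlice (hU : MeasurableSet U)
    (hf : IntegrableOn f U (μ.prod (ν.prod ρ))) :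
    Integrable (fun q : α × γ ↦ ∫ y in middleSlice U q.1 q.2, f (q.1, y, q.2) ∂ν) (μ.prod ρ) := by
  simpa only [integral_indicator_insertMiddle hU] using
    (integrable_indicator_insertMiddle hU hf).integral_prod_left

lemma setIntegral_eq_integral_middleSlice (hU : MeasurableSet U)
    (hf : IntegrableOn f U (μ.prod (ν.prod ρ))) :
    ∫ p in U, f p ∂μ.prod (ν.prod ρ) =
      ∫ q : α × γ, (∫ y in middleSlice U q.1 q.2, f (q.1, y, q.2) ∂ν) ∂μ.prod ρ := by
  rw [← integral_indicator hU, ← measurePreserving_insertMiddle.integral_comp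
    (insertMiddle α β γ).measurableEmbedding,
    integral_prod _ (integrable_indicator_insertMiddle hU hf)]
  simp only [integral_indicator_insertMiddle hU]

end MiddleSlice

section Trigonometry

lemma abs_cos_mul_sub_le_abs_sin_sub_sin {θ θ₀ : ℝ} (hθ : |θ| ≤ π / 2) (hθ₀ : |θ₀| ≤ π / 2) :
    |Real.cos θ₀ * (θ - θ₀)| ≤ π * |Real.sin θ - Real.sin θ₀| := by
  rw [abs_le] at hθ hθ₀
  have h_cos : Real.cos θ₀ ≤ 2 * |Real.cos ((θ + θ₀) / 2)| :=
    calc Real.cos θ₀ ≤ Real.cos θ + Real.cos θ₀ :=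
          le_add_of_nonneg_left (Real.cos_nonneg_of_mem_Icc ⟨by linarith, by linarith⟩)
      _ = 2 * Real.cos ((θ + θ₀) / 2) * Real.cos ((θ - θ₀) / 2) := Real.cos_add_cos θ θ₀
      _ ≤ |2 * Real.cos ((θ + θ₀) / 2)| * |Real.cos ((θ - θ₀) / 2)| :=
          (le_abs_self _).trans_eq (abs_mul _ _)
      _ ≤ |2 * Real.cos ((θ + θ₀) / 2)| :=
          mul_le_of_le_one_right (abs_nonneg _) (Real.abs_cos_le_one _)
      _ = 2 * |Real.cos ((θ + θ₀) / 2)| := by rw [abs_mul, abs_two]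
  have h_sin : |θ - θ₀| ≤ π * |Real.sin ((θ - θ₀) / 2)| := by
    have h := Real.mul_abs_le_abs_sin (x := (θ - θ₀) / 2)
      (abs_le.2 ⟨by linarith, by linarith⟩)
    rwa [abs_div, abs_two, ← mul_div_right_comm, mul_div_cancel₀ _ two_ne_zero,
      div_le_iff₀' pi_pos] at h
  calc |Real.cos θ₀ * (θ - θ₀)|
      = Real.cos θ₀ * |θ - θ₀| := by
        rw [abs_mul, abs_of_nonneg (Real.cos_nonneg_of_mem_Icc ⟨by linarith, by linarith⟩)]
    _ ≤ 2 * |Real.cos ((θ + θ₀) / 2)| * (π * |Real.sin ((θ - θ₀) / 2)|) := by gcongr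
    _ = π * |Real.sin θ - Real.sin θ₀| := by
        rw [Real.sin_sub_sin, abs_mul, abs_mul, abs_two]
        ring

lemma hasSimpleZeroOn_sin_sub_sin {a θ₀ : ℝ} (hθ₀ : |θ₀| < a) (ha : a ≤ π / 2) :
    HasSimpleZeroOn π (fun θ ↦ Real.sin θ - Real.sin θ₀) (Icc (-a) a) θ₀ (Real.cos θ₀) where
  pos := pi_pos
  mem_nhds := Icc_mem_nhds (neg_lt_of_abs_lt hθ₀) (lt_of_abs_lt hθ₀)
  map_eq_zero := sub_self _
  hasDerivAt := (Real.hasDerivAt_sin θ₀).sub_const _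
  slope_ne_zero := (Real.cos_pos_of_mem_Ioo (abs_lt.1 (hθ₀.trans_le ha))).ne'
  abs_mul_le _ hθ :=
    abs_cos_mul_sub_le_abs_sin_sub_sin ((abs_le.2 hθ).trans ha) (hθ₀.le.trans ha)

lemma abs_tan_mul_lt_sin {a q : ℝ} (ha : 0 < a) (ha' : a < π / 2) (hq : |q| < Real.cos a) :
    |Real.tan a * q| < Real.sin a := by
  have h_tan : 0 < Real.tan a := Real.tan_pos_of_pos_of_lt_pi_div_two ha ha'
  rw [abs_mul, abs_of_pos h_tan,
    ← Real.tan_mul_cos (Real.cos_pos_of_mem_Ioo ⟨by linarith, ha'⟩).ne']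
  exact mul_lt_mul_of_pos_left hq h_tan

lemma sin_arcsin_tan_mul {a q : ℝ} (ha : 0 < a) (ha' : a < π / 2) (hq : |q| < Real.cos a) :
    Real.sin (Real.arcsin (Real.tan a * q)) = Real.tan a * q := by
  have h := abs_le.1 ((abs_tan_mul_lt_sin ha ha' hq).le.trans (Real.sin_le_one a))
  exact Real.sin_arcsin h.1 h.2

lemma abs_arcsin_tan_mul_lt {a q : ℝ} (ha : 0 < a) (ha' : a < π / 2) (hq : |q| < Real.cos a) :
    |Real.arcsin (Real.tan a * q)| < a := by
  obtain ⟨h_lower, h_upper⟩ := abs_lt.1 (abs_tan_mul_lt_sin ha ha' hq)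
  rw [abs_lt, Real.lt_arcsin_iff_sin_lt' ⟨by linarith, by linarith⟩,
    Real.arcsin_lt_iff_lt_sin' ⟨by linarith, by linarith⟩, Real.sin_neg]
  exact ⟨h_lower, h_upper⟩

lemma cos_mul_cos_arcsin_tan_mul {a : ℝ} (q : ℝ) (ha : 0 < Real.cos a) :
    Real.cos a * Real.cos (Real.arcsin (Real.tan a * q)) =
      √(Real.cos a ^ 2 - Real.sin a ^ 2 * q ^ 2) := by
  rw [Real.cos_arcsin, ← Real.tan_mul_cos ha.ne']
  nth_rw 1 [← Real.sqrt_sq ha.le]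
  rw [← Real.sqrt_mul (sq_nonneg _)]
  ring_nf

end Trigonometry

section Resonance

lemma Fp_eq (x z : ℝ) :
    Fp x z = 4 * (Real.cos ((z - x) / 4) ^ 2 -
      Real.sin ((z - x) / 4) ^ 2 * Real.cos ((x + z) / 4) ^ 2) := by
  have h_sum := Real.cos_add_cos (z / 2) (x / 2)
  have h_prod := Real.two_mul_sin_mul_sin (z / 2) (x / 2)
  rw [show (z / 2 + x / 2) / 2 = (x + z) / 4 by ring,
    show (z / 2 - x / 2) / 2 = (z - x) / 4 by ring] at h_sum
  rw [show z / 2 - x / 2 = 2 * ((z - x) / 4) by ring,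
    show z / 2 + x / 2 = 2 * ((x + z) / 4) by ring, Real.cos_two_mul, Real.cos_two_mul] at h_prod
  rw [Fp, add_comm (Real.cos (x / 2)), h_sum, Real.sin_sq]
  linear_combination 2 * h_prod

lemma abs_cos_add_lt_cos_sub {x z : ℝ} (hx : x ∈ Ioo 0 (2 * π)) (hz : z ∈ Ioo 0 (2 * π)) :
    |Real.cos ((x + z) / 4)| < Real.cos ((z - x) / 4) := by
  have h_sin : ∀ t ∈ Ioo 0 (2 * π), 0 < Real.sin (t / 4) := fun t ht ↦
    Real.sin_pos_of_pos_of_lt_pi (by linarith [ht.1]) (by linarith [ht.1, ht.2])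
  have h_cos : ∀ t ∈ Ioo 0 (2 * π), 0 < Real.cos (t / 4) := fun t ht ↦
    Real.cos_pos_of_mem_Ioo ⟨by linarith [ht.1, ht.2], by linarith [ht.2]⟩
  rw [add_div, sub_div, Real.cos_add, Real.cos_sub, abs_lt]
  have := mul_pos (h_sin x hx) (h_sin z hz)
  have := mul_pos (h_cos x hx) (h_cos z hz)
  constructor <;> linarith

lemma omg_of_mem_Icc {x : ℝ} (hx : x ∈ Icc 0 (2 * π)) : omg x = Real.sin (x / 2) :=
  abs_of_nonneg (Real.sin_nonneg_of_nonneg_of_le_pi (by linarith [hx.1]) (by linarith [hx.2]))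

lemma omg_neg (x : ℝ) : omg (-x) = omg x := by
  rw [omg, neg_div, Real.sin_neg, abs_neg, omg]

lemma omg_two_pi_sub (x : ℝ) : omg (2 * π - x) = omg x := by
  rw [omg, sub_div, mul_div_cancel_left₀ _ two_ne_zero, Real.sin_pi_sub, omg]

lemma middleSlice_Uminus_of_lt {x z : ℝ} (hx : 0 ≤ x) (hz : z ≤ 2 * π) (hxz : x < z) :
    middleSlice Uminus x z = Icc 0 (z - x) := by
  ext y
  simp only [middleSlice, Uminus, mem_ofPred_eq, mem_Icc]
  constructor
  · rintro ⟨-, hy, -, h | h⟩ <;> constructor <;> linarith [hy.1, hy.2]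
  · rintro ⟨hy, hy'⟩
    refine ⟨⟨?_, ?_⟩, ⟨?_, ?_⟩, ⟨?_, ?_⟩, Or.inl ?_⟩ <;> linarith

lemma Omg_of_mem_Icc {x y z : ℝ} (hx : 0 ≤ x) (hz : z ≤ 2 * π) (hy : y ∈ Icc 0 (z - x)) :
    Omg x y z = 2 * Real.cos ((z - x) / 4) * Real.sin ((2 * y + x - z) / 4) -
      2 * Real.sin ((z - x) / 4) * Real.cos ((x + z) / 4) := by
  obtain ⟨hy, hy'⟩ := hy
  have h_xz := Real.sin_sub_sin (z / 2) (x / 2)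
  have h_yz := Real.sin_sub_sin (y / 2) ((z - x - y) / 2)
  rw [show (z / 2 - x / 2) / 2 = (z - x) / 4 by ring,
    show (z / 2 + x / 2) / 2 = (x + z) / 4 by ring] at h_xz
  rw [show (y / 2 - (z - x - y) / 2) / 2 = (2 * y + x - z) / 4 by ring,
    show (y / 2 + (z - x - y) / 2) / 2 = (z - x) / 4 by ring] at h_yz
  rw [Omg, ← omg_neg (x + y - z), show -(x + y - z) = z - x - y by ring,
    omg_of_mem_Icc ⟨hx, by linarith⟩, omg_of_mem_Icc ⟨hy, by linarith⟩,
    omg_of_mem_Icc ⟨by linarith, hz⟩, omg_of_mem_Icc ⟨by linarith, by linarith⟩]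
  linear_combination h_yz - h_xz

lemma hasSimpleZeroOn_Omg_of_lt {x z : ℝ} (hx : x ∈ Ioo 0 (2 * π)) (hz : z ∈ Ioo 0 (2 * π))
    (hxz : x < z) :
    HasSimpleZeroOn π (fun y ↦ Omg x y z) (middleSlice Uminus x z) (h0 x z) (√(Fp x z) / 2) := by
  set a := (z - x) / 4 with ha_def
  set q := Real.cos ((x + z) / 4)
  set θ₀ := Real.arcsin (Real.tan a * q) with hθ₀_def
  have ha : 0 < a := by linarith
  have ha' : a < π / 2 := by linarith [hx.1, hz.2]
  have hq : |q| < Real.cos a := abs_cos_add_lt_cos_sub hx hz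
  have h_cos : 0 < Real.cos a := (abs_nonneg q).trans_lt hq
  have h_centre : 1 / 2 * h0 x z + -a = θ₀ := by
    rw [h0, abs_of_pos (sub_pos.2 hxz)]
    linarith
  have h_slope : 2 * Real.cos a * (Real.cos θ₀ * (1 / 2)) = √(Fp x z) / 2 := by
    rw [Fp_eq, Real.sqrt_mul zero_le_four, ← cos_mul_cos_arcsin_tan_mul q h_cos,
      show (4 : ℝ) = 2 ^ 2 by norm_num, Real.sqrt_sq zero_le_two]
    ring
  have h_slice : middleSlice Uminus x z = (fun y ↦ 1 / 2 * y + -a) ⁻¹' Icc (-a) a := by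
    ext y
    rw [middleSlice_Uminus_of_lt hx.1.le hz.2.le hxz]
    simp only [mem_preimage, mem_Icc]
    constructor <;> rintro ⟨hy, hy'⟩ <;> constructor <;> linarith
  have h_zero := hasSimpleZeroOn_sin_sub_sin (abs_arcsin_tan_mul_lt ha ha' hq) ha'.le
  rw [← hθ₀_def, ← h_centre] at h_zero
  have h_model := (h_zero.comp_mul_add one_half_pos.ne').const_mul (mul_pos two_pos h_cos).ne'
  rw [h_centre, h_slope, ← h_slice] at h_model
  refine h_model.congr fun y hy ↦ ?_
  rw [middleSlice_Uminus_of_lt hx.1.le hz.2.le hxz] at hy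
  simp only [Omg_of_mem_Icc hx.1.le hz.2.le hy, ← ha_def]
  rw [sin_arcsin_tan_mul ha ha' hq, ← Real.tan_mul_cos h_cos.ne',
    show (2 * y + x - z) / 4 = 1 / 2 * y + -a by rw [ha_def]; ring]
  ring

lemma Omg_two_pi_sub (x y z : ℝ) : Omg (2 * π - x) (2 * π - y) (2 * π - z) = Omg x y z := by
  simp only [Omg, omg_two_pi_sub,
    show 2 * π - x + (2 * π - y) - (2 * π - z) = 2 * π - (x + y - z) by ring]

lemma Fp_two_pi_sub (x z : ℝ) : Fp (2 * π - x) (2 * π - z) = Fp x z := by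
  simp only [Fp, sub_div, mul_div_cancel_left₀ _ (two_ne_zero' ℝ), Real.cos_pi_sub,
    Real.sin_pi_sub]
  ring

lemma h0_two_pi_sub (x z : ℝ) : h0 (2 * π - x) (2 * π - z) = -h0 x z := by
  unfold h0
  rw [show 2 * π - z - (2 * π - x) = -(z - x) by ring, abs_neg,
    show (2 * π - x + (2 * π - z)) / 4 = π - (x + z) / 4 by ring, Real.cos_pi_sub, mul_neg,
    Real.arcsin_neg]
  ring

lemma middleSlice_Uminus_two_pi_sub (x z : ℝ) :
    (fun y ↦ 2 * π - y) ⁻¹' middleSlice Uminus (2 * π - x) (2 * π - z) =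
      middleSlice Uminus x z := by
  ext y
  simp only [middleSlice, Uminus, mem_preimage, mem_ofPred_eq, mem_Icc]
  constructor <;> rintro ⟨⟨hx, hx'⟩, ⟨hy, hy'⟩, ⟨hz, hz'⟩, h⟩ <;>
    refine ⟨⟨?_, ?_⟩, ⟨?_, ?_⟩, ⟨?_, ?_⟩, h.symm.imp ?_ ?_⟩ <;> intros <;> linarith

-- The point reflection of the cube in its centre preserves `Ω` and swaps the two pieces of `U₋`.
lemma hasSimpleZeroOn_Omg_of_gt {x z : ℝ} (hx : x ∈ Ioo 0 (2 * π)) (hz : z ∈ Ioo 0 (2 * π))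
    (hxz : z < x) :
    HasSimpleZeroOn π (fun y ↦ Omg x y z) (middleSlice Uminus x z) (h0 x z + 2 * π)
      (-(√(Fp x z) / 2)) := by
  have h_refl : ∀ t ∈ Ioo 0 (2 * π), 2 * π - t ∈ Ioo 0 (2 * π) := fun t ht ↦
    ⟨by linarith [ht.2], by linarith [ht.1]⟩
  have h_lt := hasSimpleZeroOn_Omg_of_lt (h_refl x hx) (h_refl z hz) (by linarith)
  rw [Fp_two_pi_sub, h0_two_pi_sub, show -h0 x z = -1 * (h0 x z + 2 * π) + 2 * π by ring] at h_lt
  have h_comp := h_lt.comp_mul_add (neg_ne_zero.2 one_ne_zero)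
  simp only [show ∀ y, -1 * y + 2 * π = 2 * π - y from fun y ↦ by ring, mul_neg_one,
    middleSlice_Uminus_two_pi_sub, Omg_two_pi_sub] at h_comp
  exact h_comp

lemma exists_hasSimpleZeroOn_Omg {x z : ℝ} (hx : x ∈ Ioo 0 (2 * π)) (hz : z ∈ Ioo 0 (2 * π))
    (hxz : x ≠ z) :
    ∃ y₀ m, (y₀ = h0 x z ∨ y₀ = h0 x z + 2 * π) ∧ |m|⁻¹ = K2 x z ∧
      HasSimpleZeroOn π (fun y ↦ Omg x y z) (middleSlice Uminus x z) y₀ m := by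
  have h_inv : |√(Fp x z) / 2|⁻¹ = K2 x z := by
    rw [abs_of_nonneg (by positivity), inv_div, K2]
  rcases hxz.lt_or_gt with h | h
  · exact ⟨_, _, Or.inl rfl, h_inv, hasSimpleZeroOn_Omg_of_lt hx hz h⟩
  · exact ⟨_, _, Or.inr rfl, by rwa [abs_neg], hasSimpleZeroOn_Omg_of_gt hx hz h⟩

lemma mod2pi_of_mem_II {x : ℝ} (hx : x ∈ II) : mod2pi x = x := by
  have h_floor : ⌊x / (2 * π)⌋ = 0 := Int.floor_eq_zero_iff.2
    ⟨div_nonneg hx.1 two_pi_pos.le, (div_lt_one two_pi_pos).2 hx.2⟩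
  rw [mod2pi, h_floor, Int.cast_zero, mul_zero, sub_zero]

lemma hFPU_of_mem_II {x z : ℝ} (hx : x ∈ II) (hz : z ∈ II) : hFPU x z = h0 x z := by
  rw [hFPU, mod2pi_of_mem_II hx, mod2pi_of_mem_II hz, sub_self, sub_zero]

end Resonance

section Integrability

lemma intervalIntegrable_sin_half_rpow {r : ℝ} (hr : -1 < r) (hr' : r ≤ 0) :
    IntervalIntegrable (fun x ↦ Real.sin (x / 2) ^ r) volume 0 (2 * π) := by
  have h_sin : ∀ x ∈ Ioc 0 π, π⁻¹ * x ≤ Real.sin (x / 2) := fun x hx ↦ by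
    have h := Real.mul_le_sin (x := x / 2) (by linarith [hx.1]) (by linarith [hx.2])
    rwa [div_mul_div_cancel₀' two_ne_zero, div_eq_inv_mul] at h
  have h_left : IntervalIntegrable (fun x ↦ Real.sin (x / 2) ^ r) volume 0 π := by
    refine ((intervalIntegral.intervalIntegrable_rpow' hr).const_mul (π⁻¹ ^ r)).mono_fun'
      (by fun_prop : Measurable _).aestronglyMeasurable ?_
    rw [uIoc_of_le pi_pos.le]
    refine ae_restrict_of_forall_mem measurableSet_Ioc fun x hx ↦ ?_
    have h_pos : 0 < π⁻¹ * x := mul_pos (inv_pos.2 pi_pos) hx.1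
    beta_reduce
    rw [Real.norm_of_nonneg (Real.rpow_nonneg (h_pos.le.trans (h_sin x hx)) r),
      ← Real.mul_rpow (inv_nonneg.2 pi_pos.le) hx.1.le]
    exact Real.rpow_le_rpow_of_nonpos h_pos (h_sin x hx) hr'
  have h_right : IntervalIntegrable (fun x ↦ Real.sin (x / 2) ^ r) volume π (2 * π) := by
    have h_symm : ∀ x, Real.sin ((2 * π - x) / 2) = Real.sin (x / 2) := fun x ↦ by
      rw [sub_div, mul_div_cancel_left₀ _ two_ne_zero, Real.sin_pi_sub]
    simpa only [h_symm, sub_zero, show 2 * π - π = π by ring] using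
      (h_left.comp_sub_left (2 * π)).symm
  exact h_left.trans h_right

lemma K2_nonneg (x z : ℝ) : 0 ≤ K2 x z := by
  unfold K2
  positivity

lemma K2_le {x z : ℝ} (hx : x ∈ Ioo 0 (2 * π)) (hz : z ∈ Ioo 0 (2 * π)) :
    K2 x z ≤ Real.sin (x / 2) ^ (-(1 / 2) : ℝ) * Real.sin (z / 2) ^ (-(1 / 2) : ℝ) := by
  have h_sin : ∀ t ∈ Ioo 0 (2 * π), 0 < Real.sin (t / 2) := fun t ht ↦
    Real.sin_pos_of_pos_of_lt_pi (by linarith [ht.1]) (by linarith [ht.2])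
  have h_prod := mul_pos (h_sin x hx) (h_sin z hz)
  have h_Fp : 2 ^ 2 * (Real.sin (x / 2) * Real.sin (z / 2)) ≤ Fp x z := by
    unfold Fp
    linarith [sq_nonneg (Real.cos (x / 2) + Real.cos (z / 2))]
  calc K2 x z ≤ 2 / √(2 ^ 2 * (Real.sin (x / 2) * Real.sin (z / 2))) := by
        unfold K2
        gcongr
    _ = (√(Real.sin (x / 2) * Real.sin (z / 2)))⁻¹ := by
        rw [Real.sqrt_mul (sq_nonneg 2), Real.sqrt_sq zero_le_two, ← div_div,
          div_self two_ne_zero, one_div]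
    _ = Real.sin (x / 2) ^ (-(1 / 2) : ℝ) * Real.sin (z / 2) ^ (-(1 / 2) : ℝ) := by
        rw [← Real.mul_rpow (h_sin x hx).le (h_sin z hz).le, Real.rpow_neg h_prod.le,
          ← Real.sqrt_eq_rpow]

lemma ae_restrict_II_prod_II : ∀ᵐ q : ℝ × ℝ ∂volume.restrict (II ×ˢ II),
    q.1 ∈ Ioo 0 (2 * π) ∧ q.2 ∈ Ioo 0 (2 * π) := by
  have h_ae : (II ×ˢ II : Set (ℝ × ℝ)) =ᵐ[volume] Ioo 0 (2 * π) ×ˢ Ioo 0 (2 * π) :=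
    Measure.set_prod_ae_eq Ioo_ae_eq_Ico.symm Ioo_ae_eq_Ico.symm
  rw [Measure.restrict_congr_set h_ae]
  exact ae_restrict_mem (measurableSet_Ioo.prod measurableSet_Ioo)

lemma ae_fst_ne_snd : ∀ᵐ q : ℝ × ℝ, q.1 ≠ q.2 := by
  have h_meas : MeasurableSet {q : ℝ × ℝ | q.1 ≠ q.2} := measurableSet_diagonal.compl
  rw [Measure.volume_eq_prod, Measure.ae_prod_iff_ae_ae h_meas]
  exact Eventually.of_forall fun x ↦ (Measure.ae_ne volume x).mono fun _ h ↦ h.symm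

lemma integrableOn_K2 : IntegrableOn (fun q : ℝ × ℝ ↦ K2 q.1 q.2) (II ×ˢ II) := by
  have h_one : IntegrableOn (fun x ↦ Real.sin (x / 2) ^ (-(1 / 2) : ℝ)) II :=
    (intervalIntegrable_iff_integrableOn_Ico_of_le two_pi_pos.le).1
      (intervalIntegrable_sin_half_rpow (by norm_num) (by norm_num))
  have h_prod : IntegrableOn (fun q : ℝ × ℝ ↦ Real.sin (q.1 / 2) ^ (-(1 / 2) : ℝ) *
      Real.sin (q.2 / 2) ^ (-(1 / 2) : ℝ)) (II ×ˢ II) := by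
    rw [IntegrableOn, Measure.volume_eq_prod, ← Measure.prod_restrict]
    exact h_one.mul_prod h_one
  refine h_prod.mono' (by unfold K2 Fp; fun_prop : Measurable _).aestronglyMeasurable ?_
  filter_upwards [ae_restrict_II_prod_II] with q ⟨hx, hz⟩
  rw [Real.norm_of_nonneg (K2_nonneg q.1 q.2)]
  exact K2_le hx hz

end Integrability

section Uminus

lemma isClosed_Uminus : IsClosed Uminus := by
  have h_eq : Uminus = Icc 0 (2 * π) ×ˢ Icc 0 (2 * π) ×ˢ Icc 0 (2 * π) ∩
      ({p | p.1 + p.2.1 ≤ p.2.2} ∪ {p | p.2.2 ≤ p.1 + p.2.1 - 2 * π}) := by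
    ext p
    simp only [Uminus, mem_ofPred_eq, mem_inter_iff, mem_prod, mem_union, and_assoc]
  rw [h_eq]
  exact (isClosed_Icc.prod (isClosed_Icc.prod isClosed_Icc)).inter
    ((isClosed_le (by fun_prop) (by fun_prop)).union (isClosed_le (by fun_prop) (by fun_prop)))

lemma isCompact_Uminus : IsCompact Uminus :=
  (isCompact_Icc.prod (isCompact_Icc.prod isCompact_Icc)).of_isClosed_subset isClosed_Uminus
    fun _ hp ↦ ⟨hp.1, hp.2.1, hp.2.2.1⟩

lemma continuous_Omg : Continuous fun p : ℝ × ℝ × ℝ ↦ Omg p.1 p.2.1 p.2.2 := by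
  unfold Omg omg
  fun_prop

variable {E : Type*} [NormedAddCommGroup E] [NormedSpace ℝ E]

lemma setIntegral_Uminus_eq {f : ℝ × ℝ × ℝ → E} (hf : IntegrableOn f Uminus) :
    ∫ p in Uminus, f p =
      ∫ q in II ×ˢ II, ∫ y in middleSlice Uminus q.1 q.2, f (q.1, y, q.2) := by
  have h_ae : (II ×ˢ II : Set (ℝ × ℝ)) =ᵐ[volume] Icc 0 (2 * π) ×ˢ Icc 0 (2 * π) :=
    Measure.set_prod_ae_eq Ico_ae_eq_Icc Ico_ae_eq_Icc
  rw [setIntegral_congr_set h_ae]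
  refine (setIntegral_eq_integral_middleSlice isClosed_Uminus.measurableSet hf).trans
    (setIntegral_eq_integral_of_forall_compl_eq_zero fun q hq ↦ ?_).symm
  have h_empty : middleSlice Uminus q.1 q.2 = ∅ :=
    eq_empty_of_forall_notMem fun y hy ↦ hq ⟨hy.1, hy.2.2.1⟩
  rw [h_empty, setIntegral_empty]

variable {G : ℝ → ℝ → ℝ → E}

lemma integrableOn_deltaE_Omg_smul
    (hcont : ContinuousOn (fun p : ℝ × ℝ × ℝ ↦ G p.1 p.2.1 p.2.2) Uminus) {ε : ℝ} (hε : ε ≠ 0) :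
    IntegrableOn (fun p : ℝ × ℝ × ℝ ↦ deltaE ε (Omg p.1 p.2.1 p.2.2) • G p.1 p.2.1 p.2.2)
      Uminus :=
  ((((continuous_deltaE hε).comp continuous_Omg).continuousOn).smul hcont).integrableOn_compact
    isCompact_Uminus

lemma norm_setIntegral_middleSlice_Uminus_le {x z ε M : ℝ} (hx : x ∈ Ioo 0 (2 * π))
    (hz : z ∈ Ioo 0 (2 * π)) (hxz : x ≠ z) (hε : 0 < ε)
    (hM : ∀ p ∈ Uminus, ‖G p.1 p.2.1 p.2.2‖ ≤ M) :
    ‖∫ y in middleSlice Uminus x z, deltaE ε (Omg x y z) • G x y z‖ ≤ K2 x z * (π * M) := by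
  obtain ⟨y₀, m, -, h_slope, h_zero⟩ := exists_hasSimpleZeroOn_Omg hx hz hxz
  refine (h_zero.norm_setIntegral_deltaE_smul_le
    (measurableSet_middleSlice isClosed_Uminus.measurableSet x z) (fun y hy ↦ hM (x, y, z) hy)
    hε).trans_eq ?_
  rw [← h_slope]
  ring

lemma tendsto_setIntegral_middleSlice_Uminus [CompleteSpace E]
    (hcont : ContinuousOn (fun p : ℝ × ℝ × ℝ ↦ G p.1 p.2.1 p.2.2) Uminus)
    (hper : ∀ x y z, G x (y + 2 * π) z = G x y z) {x z M : ℝ} (hx : x ∈ Ioo 0 (2 * π))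
    (hz : z ∈ Ioo 0 (2 * π)) (hxz : x ≠ z) (hM : ∀ p ∈ Uminus, ‖G p.1 p.2.1 p.2.2‖ ≤ M) :
    Tendsto (fun ε ↦ ∫ y in middleSlice Uminus x z, deltaE ε (Omg x y z) • G x y z) (𝓝[>] 0)
      (𝓝 (K2 x z • G x (hFPU x z) z)) := by
  obtain ⟨y₀, m, h_point, h_slope, h_zero⟩ := exists_hasSimpleZeroOn_Omg hx hz hxz
  have h_G : G x (hFPU x z) z = G x y₀ z := by
    rw [hFPU_of_mem_II (Ioo_subset_Ico_self hx) (Ioo_subset_Ico_self hz)]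
    rcases h_point with rfl | rfl
    · rfl
    · rw [hper]
  have h_line : Continuous fun y : ℝ ↦ (x, y, z) := by fun_prop
  have h_meas := measurableSet_middleSlice isClosed_Uminus.measurableSet x z
  have h_slice : ContinuousOn (fun y ↦ G x y z) (middleSlice Uminus x z) :=
    hcont.comp h_line.continuousOn fun _ hy ↦ hy
  rw [h_G, ← h_slope]
  exact h_zero.tendsto_setIntegral_deltaE_smul h_meas
    (continuous_Omg.comp h_line).measurable.aemeasurable (h_slice.aestronglyMeasurable h_meas)
    (fun y hy ↦ hM (x, y, z) hy) (h_slice.continuousAt h_zero.mem_nhds)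

end Uminus

theorem delta_limit_on_Uminus_general {E : Type*} [NormedAddCommGroup E] [NormedSpace ℝ E]
    [CompleteSpace E] (G : ℝ → ℝ → ℝ → E)
    (hcont : ContinuousOn (fun p : ℝ × ℝ × ℝ ↦ G p.1 p.2.1 p.2.2) Uminus)
    (hper : ∀ x y z, G x (y + 2 * π) z = G x y z) :
    Tendsto (fun ε ↦ ∫ p in Uminus, deltaE ε (Omg p.1 p.2.1 p.2.2) • G p.1 p.2.1 p.2.2)
      (𝓝[>] 0) (𝓝 (∫ q in II ×ˢ II, (2 / √(Fp q.1 q.2)) • G q.1 (hFPU q.1 q.2) q.2)) := by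
  obtain ⟨M, hM⟩ := isCompact_Uminus.exists_bound_of_continuousOn hcont
  have h_fubini : ∀ ε > 0,
      ∫ q in II ×ˢ II, ∫ y in middleSlice Uminus q.1 q.2, deltaE ε (Omg q.1 y q.2) • G q.1 y q.2 =
        ∫ p in Uminus, deltaE ε (Omg p.1 p.2.1 p.2.2) • G p.1 p.2.1 p.2.2 := fun ε hε ↦
    (setIntegral_Uminus_eq (integrableOn_deltaE_Omg_smul hcont hε.ne')).symm
  refine Tendsto.congr' (eventually_mem_nhdsWithin.mono h_fubini) <|
    tendsto_integral_filter_of_dominated_convergence (fun q ↦ K2 q.1 q.2 * (π * M)) ?_ ?_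
      (integrableOn_K2.mul_const _) ?_
  · filter_upwards [self_mem_nhdsWithin] with ε hε
    exact (integrable_setIntegral_middleSlice isClosed_Uminus.measurableSet
      (integrableOn_deltaE_Omg_smul hcont (ne_of_gt hε))).aestronglyMeasurable.restrict
  · filter_upwards [self_mem_nhdsWithin] with ε hε
    filter_upwards [ae_restrict_II_prod_II, ae_restrict_of_ae ae_fst_ne_snd] with q ⟨hx, hz⟩ hxz
    exact norm_setIntegral_middleSlice_Uminus_le hx hz hxz hε hM
  · filter_upwards [ae_restrict_II_prod_II, ae_restrict_of_ae ae_fst_ne_snd] with q ⟨hx, hz⟩ hxz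
    exact tendsto_setIntegral_middleSlice_Uminus hcont hper hx hz hxz hM

/-- **Lemma 3.3.**  For a continuous, `2π`-periodic `G : ℝ³ → ℂ`,
`∫_{U₋} δ_ε(Ω(x,y,z)) G(x,y,z) dx dy dz → ∫_{I²} (2/√(F₊(x,z))) G(x, h(x,z), z) dx dz`
as `ε → 0⁺`. -/
theorem delta_limit_on_Uminus
    (G : ℝ → ℝ → ℝ → ℂ)
    (hcont : Continuous fun p : ℝ × ℝ × ℝ => G p.1 p.2.1 p.2.2)
    (hper1 : ∀ x y z : ℝ, G (x + 2 * π) y z = G x y z)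
    (hper2 : ∀ x y z : ℝ, G x (y + 2 * π) z = G x y z)
    (hper3 : ∀ x y z : ℝ, G x y (z + 2 * π) = G x y z) :
    Tendsto
      (fun ε : ℝ =>
        ∫ p in Uminus, (deltaE ε (Omg p.1 p.2.1 p.2.2) : ℝ) • G p.1 p.2.1 p.2.2)
      (𝓝[>] (0 : ℝ))
      (𝓝 (∫ p in II ×ˢ II, (2 / Real.sqrt (Fp p.1 p.2) : ℝ) • G p.1 (hFPU p.1 p.2) p.2)) := by
  exact delta_limit_on_Uminus_general G hcont.continuousOn hper2
end
end
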